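/- arXiv:math-ph/0305009 — 3 statements merged into one kernel-verified Lean document; each statement's English description precedes it below -/
import Mathlib

section
/- Let Ω ⊆ ℝ × ℝ³ be open, let φ : Ω → ℝ be twice continuously differentiable, let a : Ω → ℝ³ and V : Ω → ℝ be real-valued, and define ω±(ξ) = ±ξ/√(1+|ξ|²) and Γ±(t,x) = i a(t,x)·ω±(∇φ(t,x)) − i V(t,x) − ½ div_x(ω±(∇φ(t,x))). If u₊, u₋ : Ω → ℂ⁴ are differentiable and solve the transport equations ∂ₜ u± + (ω±(∇φ)·∇) u± = Γ± u± on Ω, then the continuity equation ∂ₜ(|u₊|² + |u₋|²) + div_x(ω₊(∇φ)|u₊|² + ω₋(∇φ)|u₋|²) = 0 holds pointwise on Ω; in particular, for solutions compactly supported in x, the total charge ∫_{ℝ³}(|u₊(t,x)|² + |u₋(t,x)|²) dx is conserved. -/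
noncomputable section

/-- The electronic group velocity ω₊(ξ) = ξ/√(1+|ξ|²). -/
def omegaP (g : Fin 3 → ℝ) : Fin 3 → ℝ := fun k => g k / Real.sqrt (1 + ∑ j, g j ^ 2)

/-- The positronic group velocity ω₋(ξ) = −ξ/√(1+|ξ|²). -/
def omegaM (g : Fin 3 → ℝ) : Fin 3 → ℝ := fun k => -(g k / Real.sqrt (1 + ∑ j, g j ^ 2))

/-- The derivative of `q ↦ ∑ i, |u q i|²` in direction `h` is `2 ∑ i, Re ⟨u i, (∂ₕ u) i⟩`. -/
lemma hasFDerivAt_sum_normSq {E ι : Type*} [NormedAddCommGroup E] [NormedSpace ℝ E] [Fintype ι]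
    {u : E → ι → ℂ} {p : E} (hu : DifferentiableAt ℝ u p) :
    HasFDerivAt (fun q => ∑ i, Complex.normSq (u q i))
      ((∑ i, 2 • (innerSL ℝ (u p i)).comp (ContinuousLinearMap.proj (R := ℝ) i)).comp
        (fderiv ℝ u p)) p := by
  have h := HasFDerivAt.fun_sum (u := Finset.univ) fun i _ =>
    ((hasFDerivAt_pi'.1 hu.hasFDerivAt) i).norm_sq
  simp only [Complex.normSq_eq_norm_sq]
  refine h.congr_fderiv ?_
  ext v
  simp

/-- If `∂ₜ u + (v·∇) u = Γ u` with `Re Γ = -½ div v`, then `∂ₜ |u|² + div (v |u|²) = 0`. -/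
lemma continuity_of_transport {n : ℕ} {ι : Type*} [Fintype ι]
    {u : ℝ × (Fin n → ℝ) → ι → ℂ} {v : ℝ × (Fin n → ℝ) → Fin n → ℝ} {Γ : ℂ}
    {p : ℝ × (Fin n → ℝ)} (hu : DifferentiableAt ℝ u p)
    (hv : ∀ k, DifferentiableAt ℝ (fun q => v q k) p)
    (hΓ : Γ.re = -(1 / 2) * ∑ k, fderiv ℝ (fun q => v q k) p (0, Pi.single k 1))
    (ht : fderiv ℝ u p (1, 0) + ∑ k, v p k • fderiv ℝ u p (0, Pi.single k 1) = Γ • u p) :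
    fderiv ℝ (fun q => ∑ i, Complex.normSq (u q i)) p (1, 0)
      + ∑ k, fderiv ℝ (fun q => v q k * ∑ i, Complex.normSq (u q i)) p (0, Pi.single k 1)
      = 0 := by
  set B : (ι → ℂ) →L[ℝ] ℝ :=
    ∑ i, 2 • (innerSL ℝ (u p i)).comp (ContinuousLinearMap.proj (R := ℝ) i) with hB
  have hρ : HasFDerivAt (fun q => ∑ i, Complex.normSq (u q i)) (B.comp (fderiv ℝ u p)) p :=
    hasFDerivAt_sum_normSq hu
  have hBΓ : B (Γ • u p) = 2 * Γ.re * ∑ i, Complex.normSq (u p i) := by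
    simp only [hB, sum_apply, Finset.mul_sum]
    refine Finset.sum_congr rfl fun i _ => ?_
    simp [Complex.inner, Complex.normSq_apply]
    ring
  have hBt := congrArg B ht
  rw [hBΓ, map_add, map_sum] at hBt
  simp only [map_smul, smul_eq_mul] at hBt
  have hprod (k : Fin n) :
      fderiv ℝ (fun q => v q k * ∑ i, Complex.normSq (u q i)) p (0, Pi.single k 1)
        = v p k * B (fderiv ℝ u p (0, Pi.single k 1))
          + (∑ i, Complex.normSq (u p i)) * fderiv ℝ (fun q => v q k) p (0, Pi.single k 1) := by
    rw [((hv k).hasFDerivAt.fun_mul hρ).fderiv]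
    simp
  simp only [hprod, hρ.fderiv, Finset.sum_add_distrib, ← Finset.mul_sum]
  rw [hΓ] at hBt
  simp only [ContinuousLinearMap.comp_apply]
  linear_combination hBt

/-- A differentiable density obeying a continuity equation, which together with its flux vanishes
outside a fixed ball for times in `[s, t]`, has the same total mass at times `s` and `t`. -/
lemma integral_eq_of_continuity {n : ℕ} {ρ : ℝ × (Fin n → ℝ) → ℝ}
    {J : Fin n → ℝ × (Fin n → ℝ) → ℝ} (hρ : Differentiable ℝ ρ)
    (hJ : ∀ k, Differentiable ℝ (J k))
    (hcont : ∀ p, fderiv ℝ ρ p (1, 0) + ∑ k, fderiv ℝ (J k) p (0, Pi.single k 1) = 0)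
    {s t R : ℝ} (hst : s ≤ t) (hR : 0 ≤ R)
    (hρR : ∀ τ ∈ Set.Icc s t, ∀ x, R ≤ ‖x‖ → ρ (τ, x) = 0)
    (hJR : ∀ k, ∀ τ ∈ Set.Icc s t, ∀ x, R ≤ ‖x‖ → J k (τ, x) = 0) :
    ∫ x, ρ (s, x) = ∫ x, ρ (t, x) := by
  let L : (Fin (n + 1) → ℝ) →L[ℝ] ℝ × (Fin n → ℝ) :=
    (ContinuousLinearMap.proj 0).prod (ContinuousLinearMap.pi fun i =>
      ContinuousLinearMap.proj i.succ)
  have hL (y) : L y = (y 0, Fin.tail y) := rfl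
  let F : Fin (n + 1) → ℝ × (Fin n → ℝ) → ℝ := Fin.cons ρ J
  have hF : ∀ i, Differentiable ℝ (F i) := Fin.cases hρ hJ
  let lo : Fin (n + 1) → ℝ := Fin.cons s fun _ => -R
  let hi : Fin (n + 1) → ℝ := Fin.cons t fun _ => R
  have hle : lo ≤ hi := Fin.cases hst fun _ => by simp [lo, hi]; linarith
  have hL0 : L (Pi.single 0 1) = (1, 0) := by
    rw [hL]; ext <;> simp [Fin.tail]
  have hLs (k : Fin n) : L (Pi.single k.succ 1) = (0, Pi.single k 1) := by
    rw [hL]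
    refine Prod.ext (by simp) (funext fun j => ?_)
    simp [Fin.tail, Pi.single_apply]
  have hdiv (y) : ∑ i, ((fderiv ℝ (F i) (L y)).comp L) (Pi.single i 1) = 0 := by
    rw [Fin.sum_univ_succ]
    simp only [ContinuousLinearMap.comp_apply, hL0, hLs]
    exact hcont (L y)
  have key := MeasureTheory.integral_divergence_of_hasFDerivAt_off_countable' lo hi hle
    (fun i y => F i (L y)) (fun i y => (fderiv ℝ (F i) (L y)).comp L) ∅ Set.countable_empty
    (fun i => ((hF i).continuous.comp L.continuous).continuousOn)
    (fun y _ i => (hF i (L y)).hasFDerivAt.comp y L.hasFDerivAt)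
    (by simp only [hdiv]; exact MeasureTheory.integrableOn_zero)
  have hside (k : Fin n) (c : ℝ) (hc : |c| = R) :
      ∫ x in Set.Icc (lo ∘ k.succ.succAbove) (hi ∘ k.succ.succAbove),
        F k.succ (L (k.succ.insertNth c x)) = 0 := by
    refine MeasureTheory.setIntegral_eq_zero_of_forall_eq_zero fun x hx => ?_
    rw [hL]
    obtain ⟨m, rfl⟩ : ∃ m, n = m + 1 := ⟨n - 1, by have := k.pos; omega⟩
    refine hJR k _ ?_ _ ?_
    · have h1 := hx.1 0
      have h2 := hx.2 0
      simp only [Function.comp_apply, Fin.succ_succAbove_zero, lo, hi, Fin.cons_zero] at h1 h2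
      have h3 : (k.succ.insertNth c x : Fin (m + 2) → ℝ) 0 = x 0 := by
        simpa using Fin.insertNth_apply_succAbove (α := fun _ => ℝ) k.succ c x 0
      exact h3 ▸ ⟨h1, h2⟩
    · have h4 := norm_le_pi_norm (Fin.tail (k.succ.insertNth c x : Fin (m + 2) → ℝ)) k
      simpa [Fin.tail, hc] using h4
  have hslice (τ : ℝ) (hτ : τ ∈ Set.Icc s t) :
      ∫ x in Set.Icc (lo ∘ Fin.succAbove 0) (hi ∘ Fin.succAbove 0),
        F 0 (L (Fin.insertNth 0 τ x)) = ∫ x, ρ (τ, x) := by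
    have h5 (x : Fin n → ℝ) : F 0 (L (Fin.insertNth 0 τ x)) = ρ (τ, x) := by
      simp [hL, F]
    simp only [h5]
    refine MeasureTheory.setIntegral_eq_integral_of_forall_compl_eq_zero fun x hx => ?_
    refine hρR τ hτ x (not_lt.1 fun hlt => hx ?_)
    have h6 (i : Fin n) := abs_le.1 ((norm_le_pi_norm x i).trans hlt.le)
    exact ⟨fun i => by simpa [lo] using (h6 i).1, fun i => by simpa [hi] using (h6 i).2⟩
  simp only [hdiv, MeasureTheory.integral_zero] at key
  rw [Fin.sum_univ_succ, Finset.sum_eq_zero fun k _ => ?_] at key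
  · have h7 : lo 0 = s := rfl
    have h8 : hi 0 = t := rfl
    rw [h7, h8, hslice s ⟨le_rfl, hst⟩, hslice t ⟨hst, le_rfl⟩] at key
    linarith
  · rw [hside k _ (by simp [hi, abs_of_nonneg hR]), hside k _ (by simp [lo, abs_of_nonneg hR]),
      sub_zero]

lemma differentiable_omegaP (k : Fin 3) : Differentiable ℝ fun g => omegaP g k := by
  intro g
  have h : 0 < 1 + ∑ j, g j ^ 2 := by positivity
  have hsum : DifferentiableAt ℝ (fun g : Fin 3 → ℝ => 1 + ∑ j, g j ^ 2) g := by fun_prop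
  simp only [omegaP, div_eq_mul_inv]
  exact (differentiableAt_apply k g).fun_mul ((hsum.sqrt h.ne').fun_inv (Real.sqrt_pos.2 h).ne')

lemma differentiable_omegaM (k : Fin 3) : Differentiable ℝ fun g => omegaM g k :=
  (differentiable_omegaP k).neg

/-- If u± solve the transport equations ∂ₜu± + (ω±(∇φ)·∇)u± = Γ±u± on an open
    set Ω, with Γ± = i a·ω±(∇φ) − iV − ½div(ω±(∇φ)), then the continuity
    equation ∂ₜ(|uP|² + |uM|²) + div(ω₊(∇φ)|uP|² + ω₋(∇φ)|uM|²) = 0 holds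
    pointwise on Ω; in particular, for solutions compactly supported in x
    (with Ω the whole space-time), the total charge
    ∫(|uP(t,x)|² + |uM(t,x)|²)dx is conserved. -/
theorem transport_continuity_and_charge_conservation
    (Ω : Set (ℝ × (Fin 3 → ℝ))) (hΩ : IsOpen Ω)
    (φ : ℝ × (Fin 3 → ℝ) → ℝ) (hφ : ContDiffOn ℝ 2 φ Ω)
    (a : ℝ × (Fin 3 → ℝ) → Fin 3 → ℝ) (V : ℝ × (Fin 3 → ℝ) → ℝ)
    (uP uM : ℝ × (Fin 3 → ℝ) → Fin 4 → ℂ)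
    (huP : DifferentiableOn ℝ uP Ω) (huM : DifferentiableOn ℝ uM Ω)
    -- the spatial gradient of the phase
    (gradφ : ℝ × (Fin 3 → ℝ) → Fin 3 → ℝ)
    (hgrad : ∀ p ∈ Ω, ∀ k : Fin 3, gradφ p k = fderiv ℝ φ p (0, Pi.single k 1))
    -- the coefficients Γ± = i a·ω±(∇φ) − iV − ½ div(ω±(∇φ))
    (ΓP ΓM : ℝ × (Fin 3 → ℝ) → ℂ)
    (hΓP : ∀ p ∈ Ω, ΓP p
      = Complex.I * ((∑ k, a p k * omegaP (gradφ p) k : ℝ) : ℂ)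
        - Complex.I * (V p : ℂ)
        - (1 / 2 : ℂ) * ((∑ k, fderiv ℝ (fun q => omegaP (gradφ q) k) p
            (0, Pi.single k 1) : ℝ) : ℂ))
    (hΓM : ∀ p ∈ Ω, ΓM p
      = Complex.I * ((∑ k, a p k * omegaM (gradφ p) k : ℝ) : ℂ)
        - Complex.I * (V p : ℂ)
        - (1 / 2 : ℂ) * ((∑ k, fderiv ℝ (fun q => omegaM (gradφ q) k) p
            (0, Pi.single k 1) : ℝ) : ℂ))
    -- the transport equations ∂ₜu± + (ω±(∇φ)·∇)u± = Γ± u±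
    (htp : ∀ p ∈ Ω,
      fderiv ℝ uP p (1, 0)
        + ∑ k, omegaP (gradφ p) k • fderiv ℝ uP p (0, Pi.single k 1)
        = ΓP p • uP p)
    (htm : ∀ p ∈ Ω,
      fderiv ℝ uM p (1, 0)
        + ∑ k, omegaM (gradφ p) k • fderiv ℝ uM p (0, Pi.single k 1)
        = ΓM p • uM p) :
    -- the continuity equation holds pointwise on Ω ...
    (∀ p ∈ Ω,
      fderiv ℝ (fun q => (∑ i, Complex.normSq (uP q i)) + ∑ i, Complex.normSq (uM q i))
          p (1, 0)
        + ∑ k, fderiv ℝ (fun q =>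
              omegaP (gradφ q) k * (∑ i, Complex.normSq (uP q i))
                + omegaM (gradφ q) k * (∑ i, Complex.normSq (uM q i)))
            p (0, Pi.single k 1)
        = 0) ∧
    -- ... and in particular, for solutions compactly supported in x, the total
    -- charge is conserved
    (Ω = Set.univ →
      (∀ T : ℝ, 0 ≤ T → ∃ R : ℝ, ∀ (t : ℝ) (x : Fin 3 → ℝ),
        |t| ≤ T → R ≤ ‖x‖ → uP (t, x) = 0 ∧ uM (t, x) = 0) →
      ∀ t₁ t₂ : ℝ,
        ∫ x : Fin 3 → ℝ, ((∑ i, Complex.normSq (uP (t₁, x) i))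
            + ∑ i, Complex.normSq (uM (t₁, x) i))
          = ∫ x : Fin 3 → ℝ, ((∑ i, Complex.normSq (uP (t₂, x) i))
            + ∑ i, Complex.normSq (uM (t₂, x) i))) := by
  have hgradφ (p) (hp : p ∈ Ω) : DifferentiableAt ℝ gradφ p := by
    refine differentiableAt_pi.2 fun k => ?_
    have hD : DifferentiableAt ℝ (fderiv ℝ φ) p :=
      ((hφ.fderiv_of_isOpen hΩ (m := 1) (by norm_num)).differentiableOn one_ne_zero).differentiableAt
        (hΩ.mem_nhds hp)
    refine (hD.clm_apply (differentiableAt_const (0, Pi.single k 1))).congr_of_eventuallyEq ?_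
    filter_upwards [hΩ.mem_nhds hp] with q hq using hgrad q hq k
  have hωP (p) (hp : p ∈ Ω) (k) : DifferentiableAt ℝ (fun q => omegaP (gradφ q) k) p :=
    (differentiable_omegaP k (gradφ p)).comp p (hgradφ p hp)
  have hωM (p) (hp : p ∈ Ω) (k) : DifferentiableAt ℝ (fun q => omegaM (gradφ q) k) p :=
    (differentiable_omegaM k (gradφ p)).comp p (hgradφ p hp)
  have huP' (p) (hp : p ∈ Ω) := huP.differentiableAt (hΩ.mem_nhds hp)
  have huM' (p) (hp : p ∈ Ω) := huM.differentiableAt (hΩ.mem_nhds hp)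
  have hρP (p) (hp : p ∈ Ω) := (hasFDerivAt_sum_normSq (huP' p hp)).differentiableAt
  have hρM (p) (hp : p ∈ Ω) := (hasFDerivAt_sum_normSq (huM' p hp)).differentiableAt
  have hre (α β δ : ℝ) :
      (Complex.I * (α : ℂ) - Complex.I * (β : ℂ) - (1 / 2 : ℂ) * (δ : ℂ)).re
        = -(1 / 2) * δ := by
    simp [Complex.mul_re]
  have hcont : ∀ p ∈ Ω,
      fderiv ℝ (fun q => (∑ i, Complex.normSq (uP q i)) + ∑ i, Complex.normSq (uM q i))
          p (1, 0)
        + ∑ k, fderiv ℝ (fun q =>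
              omegaP (gradφ q) k * (∑ i, Complex.normSq (uP q i))
                + omegaM (gradφ q) k * (∑ i, Complex.normSq (uM q i)))
            p (0, Pi.single k 1)
        = 0 := by
    intro p hp
    have hP := continuity_of_transport (huP' p hp) (hωP p hp) (by rw [hΓP p hp, hre]) (htp p hp)
    have hM := continuity_of_transport (huM' p hp) (hωM p hp) (by rw [hΓM p hp, hre]) (htm p hp)
    have hsum (k : Fin 3) := fderiv_fun_add ((hωP p hp k).mul (hρP p hp))
      ((hωM p hp k).mul (hρM p hp))
    simp only [Pi.mul_def] at hsum
    simp only [fderiv_fun_add (hρP p hp) (hρM p hp), hsum, add_apply, Finset.sum_add_distrib]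
    linear_combination hP + hM
  refine ⟨hcont, ?_⟩
  rintro rfl hsupp
  have hmono (s t : ℝ) (hst : s ≤ t) :
      ∫ x : Fin 3 → ℝ, ((∑ i, Complex.normSq (uP (s, x) i)) + ∑ i, Complex.normSq (uM (s, x) i))
        = ∫ x : Fin 3 → ℝ,
          ((∑ i, Complex.normSq (uP (t, x) i)) + ∑ i, Complex.normSq (uM (t, x) i)) := by
    obtain ⟨R, hR⟩ := hsupp (max |s| |t|) ((abs_nonneg s).trans (le_max_left _ _))
    have hzero (τ) (hτ : τ ∈ Set.Icc s t) (x : Fin 3 → ℝ) (hx : max R 0 ≤ ‖x‖) :=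
      hR τ x (abs_le_max_abs_abs hτ.1 hτ.2) ((le_max_left _ _).trans hx)
    refine integral_eq_of_continuity
      (ρ := fun q => (∑ i, Complex.normSq (uP q i)) + ∑ i, Complex.normSq (uM q i))
      (J := fun k q => omegaP (gradφ q) k * (∑ i, Complex.normSq (uP q i))
        + omegaM (gradφ q) k * (∑ i, Complex.normSq (uM q i)))
      (fun p => (hρP p trivial).add (hρM p trivial))
      (fun k p => ((hωP p trivial k).mul (hρP p trivial)).add
        ((hωM p trivial k).mul (hρM p trivial)))
      (fun p => hcont p trivial) hst (le_max_right R 0) ?_ ?_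
    · intro τ hτ x hx
      simp [hzero τ hτ x hx]
    · intro k τ hτ x hx
      simp [hzero τ hτ x hx]
  intro t₁ t₂
  rcases le_total t₁ t₂ with h | h
  · exact hmono _ _ h
  · exact (hmono _ _ h).symm

end
end

section
/- Let φ_I : ℝ³ → ℝ be smooth (C^∞) with uniformly bounded Hessian, i.e. there exists C such that ‖D²φ_I(x)‖ ≤ C for all x ∈ ℝ³. Then there exists T₊ > 0 and a uniquely determined smooth function φ₊ : [0,T₊) × ℝ³ → ℝ solving the relativistic Hamilton–Jacobi (eikonal) equation ∂ₜφ₊(t,x) = √(1 + |∇φ₊(t,x)|²) for all (t,x) ∈ [0,T₊) × ℝ³ with initial datum φ₊(0,·) = φ_I; in particular (∂ₜφ₊)² − |∇φ₊|² = 1 on the slab. The same holds with the Hamiltonian −√(1+|∇φ|²) in place of √(1+|∇φ|²). -/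
noncomputable section

open Set

section RelativisticEnergy

variable {E : Type*} [SeminormedAddCommGroup E]

/-- The relativistic energy `√(1 + |p|²)`. -/
def relEnergy (p : E) : ℝ := Real.sqrt (1 + ‖p‖ ^ 2)

theorem relEnergy_sq (p : E) : relEnergy p ^ 2 = 1 + ‖p‖ ^ 2 :=
  Real.sq_sqrt (by positivity)

theorem one_le_relEnergy (p : E) : 1 ≤ relEnergy p :=
  Real.one_le_sqrt.2 (by nlinarith [sq_nonneg ‖p‖])

theorem relEnergy_pos (p : E) : 0 < relEnergy p :=
  one_pos.trans_le (one_le_relEnergy p)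

theorem norm_le_relEnergy (p : E) : ‖p‖ ≤ relEnergy p :=
  Real.le_sqrt_of_sq_le (by linarith)

theorem lipschitzWith_relEnergy : LipschitzWith 1 (relEnergy : E → ℝ) := by
  refine LipschitzWith.of_le_add fun p q => ?_
  rw [dist_eq_norm]
  have hp := relEnergy_sq p
  have hq := relEnergy_sq q
  have hpq : ‖p‖ ≤ ‖q‖ + ‖p - q‖ := by
    simpa using norm_add_le q (p - q)
  have := norm_le_relEnergy q
  have := norm_nonneg p
  have := norm_nonneg q
  have := norm_nonneg (p - q)
  refine abs_le_of_sq_le_sq' ?_ (by linarith [relEnergy_pos q]) |>.2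
  nlinarith

end RelativisticEnergy

section HamiltonJacobi

variable {E : Type*} [NormedAddCommGroup E] [InnerProductSpace ℝ E]

/-- The linear form `(s, ξ) ↦ a s + ⟪p, ξ⟫` on space-time, with time component `a` and
spatial gradient `p`. -/
def spaceTimeForm (a : ℝ) (p : E) : ℝ × E →L[ℝ] ℝ :=
  a • ContinuousLinearMap.fst ℝ ℝ E + (innerSL ℝ p) ∘L ContinuousLinearMap.snd ℝ ℝ E

@[simp]
theorem spaceTimeForm_apply (a : ℝ) (p : E) (z : ℝ × E) :
    spaceTimeForm a p z = a * z.1 + inner ℝ p z.2 := by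
  simp [spaceTimeForm]

theorem spaceTimeForm_sub (a b : ℝ) (p q : E) :
    spaceTimeForm a p - spaceTimeForm b q = spaceTimeForm (a - b) (p - q) := by
  ext <;> simp [inner_sub_left]

/-- Comparison principle: a function that is nonpositive at time zero and whose time derivative
is at most the norm of its spatial gradient stays nonpositive. The proof maximizes
`w - ε t` over the backward light cone with vertex at the given point. -/
theorem nonpos_of_timeDeriv_le_norm_gradient [FiniteDimensional ℝ E] {T : ℝ} {w : ℝ × E → ℝ}
    (hw : ∀ t ∈ Ico 0 T, ∀ x, ∃ a p, HasFDerivAt w (spaceTimeForm a p) (t, x) ∧ a ≤ ‖p‖)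
    (h0 : ∀ x, w (0, x) ≤ 0) {t : ℝ} (ht : t ∈ Ico 0 T) (x : E) : w (t, x) ≤ 0 := by
  have key : ∀ ε > 0, w (t, x) ≤ ε * t := by
    intro ε hε
    set K : Set (ℝ × E) := {z | 0 ≤ z.1 ∧ z.1 ≤ t ∧ dist z.2 x ≤ t - z.1}
    have hKclosed : IsClosed K :=
      (isClosed_le continuous_const continuous_fst).inter
        ((isClosed_le continuous_fst continuous_const).inter
          (isClosed_le (continuous_snd.dist continuous_const) (continuous_const.sub continuous_fst)))
    have hKcompact : IsCompact K := by
      refine (isCompact_Icc.prod (isCompact_closedBall x t)).of_isClosed_subset hKclosed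
        (s := Icc 0 t ×ˢ Metric.closedBall x t) ?_
      rintro ⟨s, y⟩ ⟨h1, h2, h3⟩
      exact ⟨⟨h1, h2⟩, by simp only [Metric.mem_closedBall] at *; linarith⟩
    have hvertex : (t, x) ∈ K := ⟨ht.1, le_rfl, by simp⟩
    have hcont : ContinuousOn (fun z : ℝ × E => w z - ε * z.1) K := by
      rintro ⟨s, y⟩ ⟨h1, h2, -⟩
      obtain ⟨a, p, h, -⟩ := hw s ⟨h1, lt_of_le_of_lt h2 ht.2⟩ y
      exact (h.continuousAt.sub (by fun_prop)).continuousWithinAt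
    obtain ⟨⟨s, y⟩, hsy, hmax⟩ := hKcompact.exists_isMaxOn ⟨_, hvertex⟩ hcont
    have hle : w (t, x) - ε * t ≤ w (s, y) - ε * s := hmax hvertex
    obtain ⟨h1, h2, h3⟩ := hsy
    simp only at h1 h2 h3
    rcases h1.eq_or_lt with rfl | hs
    · have := h0 y
      linarith
    · exfalso
      obtain ⟨a, p, h, hap⟩ := hw s ⟨h1, lt_of_le_of_lt h2 ht.2⟩ y
      set e : E := ‖p‖⁻¹ • p with he
      have he1 : ‖e‖ ≤ 1 := by
        rw [he, norm_smul, norm_inv, norm_norm]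
        exact inv_mul_le_one
      have hpe : inner ℝ p e = ‖p‖ := by
        rw [he, inner_smul_right, real_inner_self_eq_norm_mul_norm]
        rcases eq_or_ne ‖p‖ 0 with h | h
        · simp [h]
        · field_simp
      have hcone : ((-s, s • e) : ℝ × E) ∈ posTangentConeAt K (s, y) := by
        apply mem_posTangentConeAt_of_segment_subset
        rw [segment_eq_image']
        rintro _ ⟨θ, ⟨hθ0, hθ1⟩, rfl⟩
        have hθs : 0 ≤ θ * s := mul_nonneg hθ0 hs.le
        refine ⟨?_, ?_, ?_⟩
        · simp; nlinarith
        · simp; nlinarith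
        · have : dist (y + θ • s • e) x ≤ dist y x + θ * s := by
            refine (dist_triangle _ y _).trans ?_
            rw [add_comm, dist_self_add_left, smul_smul, norm_smul, Real.norm_of_nonneg hθs]
            nlinarith
          simp
          linarith
      have hder : HasFDerivAt (fun z : ℝ × E => w z - ε * z.1) (spaceTimeForm (a - ε) p) (s, y) := by
        have h' := h.sub ((hasFDerivAt_fst (𝕜 := ℝ) (p := (s, y))).const_mul ε)
        convert! h' using 1
        ext <;> simp
      have := hmax.localize.hasFDerivWithinAt_nonpos hder.hasFDerivWithinAt hcone
      simp only [spaceTimeForm_apply, inner_smul_right, hpe] at this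
      nlinarith
  by_contra! hpos
  have := key (w (t, x) / (2 * (t + 1))) (by have := ht.1; positivity)
  have ht0 := ht.1
  rw [div_mul_eq_mul_div, le_div_iff₀ (by positivity)] at this
  nlinarith

/-- Finite propagation speed gives uniqueness for `∂ₜφ = H(∇φ)` when `H` is `1`-Lipschitz. -/
theorem hamiltonJacobi_eqOn [FiniteDimensional ℝ E] {H : E → ℝ} (hH : LipschitzWith 1 H) {T : ℝ}
    {φ ψ : ℝ × E → ℝ}
    (hφ : ∀ t ∈ Ico 0 T, ∀ x, ∃ p, HasFDerivAt φ (spaceTimeForm (H p) p) (t, x))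
    (hψ : ∀ t ∈ Ico 0 T, ∀ x, ∃ p, HasFDerivAt ψ (spaceTimeForm (H p) p) (t, x))
    (h0 : ∀ x, ψ (0, x) = φ (0, x)) : EqOn ψ φ (Ico 0 T ×ˢ univ) := by
  have aux : ∀ {φ ψ : ℝ × E → ℝ},
      (∀ t ∈ Ico 0 T, ∀ x, ∃ p, HasFDerivAt φ (spaceTimeForm (H p) p) (t, x)) →
      (∀ t ∈ Ico 0 T, ∀ x, ∃ p, HasFDerivAt ψ (spaceTimeForm (H p) p) (t, x)) →
      (∀ x, ψ (0, x) = φ (0, x)) → ∀ t ∈ Ico 0 T, ∀ x, ψ (t, x) ≤ φ (t, x) := by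
    intro φ ψ hφ hψ h0 t ht x
    refine sub_nonpos.1 (nonpos_of_timeDeriv_le_norm_gradient (w := fun z => ψ z - φ z) ?_
      (fun x => (sub_eq_zero.2 (h0 x)).le) ht x)
    intro t ht x
    obtain ⟨p, hp⟩ := hφ t ht x
    obtain ⟨q, hq⟩ := hψ t ht x
    refine ⟨H q - H p, q - p, ?_, ?_⟩
    · rw [← spaceTimeForm_sub]
      exact hq.sub hp
    · have := hH.dist_le_mul q p
      rw [Real.dist_eq, dist_eq_norm, NNReal.coe_one, one_mul] at this
      exact (le_abs_self _).trans this
  rintro ⟨t, x⟩ ⟨ht, -⟩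
  exact le_antisymm (aux hφ hψ h0 t ht x) (aux hψ hφ (fun x => (h0 x).symm) t ht x)

/-- The characteristic map `(t, y) ↦ (t, y - t v(y))`. -/
def characteristicMap (v : E → E) (z : ℝ × E) : ℝ × E := (z.1, z.2 - z.1 • v z.2)

theorem characteristicMap_injOn {v : E → E} {K : NNReal} (hv : LipschitzWith K v) {z z' : ℝ × E}
    (hz : |z.1| * K < 1) (h : characteristicMap v z = characteristicMap v z') : z = z' := by
  obtain ⟨t, y⟩ := z
  obtain ⟨t', y'⟩ := z'
  obtain ⟨h0, h⟩ := Prod.ext_iff.1 h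
  simp only [characteristicMap] at h0 h hz
  subst h0
  have h1 : y - y' = t • (v y - v y') := by
    rw [smul_sub]
    exact sub_eq_sub_iff_sub_eq_sub.1 h
  have h2 : ‖y - y'‖ ≤ |t| * (K * ‖y - y'‖) := by
    conv_lhs => rw [h1, norm_smul, Real.norm_eq_abs]
    gcongr
    exact hv.norm_sub_le y y'
  have h3 : ‖y - y'‖ = 0 := by
    have := norm_nonneg (y - y')
    nlinarith
  rw [sub_eq_zero.1 (norm_eq_zero.1 h3)]

theorem exists_characteristicMap_eq [CompleteSpace E] {v : E → E} {K : NNReal}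
    (hv : LipschitzWith K v) {t : ℝ} (ht : |t| * K < 1) (x : E) :
    ∃ y, characteristicMap v (t, y) = (t, x) := by
  have hc : ContractingWith (‖t‖₊ * K) (fun y => x + t • v y) := by
    refine ⟨?_, ?_⟩
    · rw [← NNReal.coe_lt_coe]
      simpa using ht
    · refine LipschitzWith.of_dist_le_mul fun y y' => ?_
      rw [dist_add_left, dist_smul₀, NNReal.coe_mul, mul_assoc, coe_nnnorm]
      gcongr
      exact hv.dist_le_mul y y'
  refine ⟨_, Prod.ext rfl (sub_eq_iff_eq_add.2 hc.fixedPoint_isFixedPt.symm)⟩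

theorem hasFDerivAt_characteristicMap {v : E → E} (t : ℝ) (y : E) (hv : DifferentiableAt ℝ v y) :
    HasFDerivAt (characteristicMap v)
      ((ContinuousLinearMap.fst ℝ ℝ E).prod (ContinuousLinearMap.snd ℝ ℝ E -
        (t • (fderiv ℝ v y ∘L ContinuousLinearMap.snd ℝ ℝ E) +
          (ContinuousLinearMap.fst ℝ ℝ E).smulRight (v y)))) (t, y) := by
  have h : HasFDerivAt (fun z : ℝ × E => v z.2) (fderiv ℝ v y ∘L .snd ℝ ℝ E) (t, y) :=
    hv.hasFDerivAt.comp (t, y) hasFDerivAt_snd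
  exact hasFDerivAt_fst.prodMk (hasFDerivAt_snd.sub (hasFDerivAt_fst.smul h))

/-- The method of characteristics for `∂ₜφ = H(∇φ)`, where `V = ∇H` and `p₀ = ∇f`. -/
theorem exists_hamiltonJacobi_solution [FiniteDimensional ℝ E] {H f : E → ℝ} {V p₀ : E → E}
    (hHV : ∀ p, HasFDerivAt H (innerSL ℝ (V p)) p) (hfp : ∀ y, HasFDerivAt f (innerSL ℝ (p₀ y)) y)
    (hH : ContDiff ℝ (⊤ : ℕ∞) H) (hf : ContDiff ℝ (⊤ : ℕ∞) f)
    (hV : ContDiff ℝ (⊤ : ℕ∞) V) (hp₀ : ContDiff ℝ (⊤ : ℕ∞) p₀) {K : NNReal}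
    (hL : LipschitzWith K (V ∘ p₀)) :
    ∃ T : ℝ, 0 < T ∧ ∃ φ : ℝ × E → ℝ, (∀ x, φ (0, x) = f x) ∧
      ∀ t x, |t| < T → ContDiffAt ℝ (⊤ : ℕ∞) φ (t, x) ∧
        ∃ p, HasFDerivAt φ (spaceTimeForm (H p) p) (t, x) := by
  have hK : ∀ {t : ℝ}, |t| < ((K : ℝ) + 1)⁻¹ → |t| * K < 1 := by
    intro t ht
    rw [← one_div, lt_div_iff₀ (by positivity)] at ht
    linarith [abs_nonneg t]
  set v := V ∘ p₀ with hv
  have hvs : ContDiff ℝ (⊤ : ℕ∞) v := hV.comp hp₀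
  have hpd : Differentiable ℝ p₀ := hp₀.differentiable (by simp)
  have hvd : Differentiable ℝ v := hvs.differentiable (by simp)
  have hGs : ContDiff ℝ (⊤ : ℕ∞) (characteristicMap v) :=
    contDiff_fst.prodMk (contDiff_snd.sub (contDiff_fst.smul (hvs.comp contDiff_snd)))
  choose! Y hY using fun (t : ℝ) (ht : |t| * K < 1) (x : E) => exists_characteristicMap_eq hL ht x
  set ℓ : E → ℝ := fun y => H (p₀ y) - inner ℝ (p₀ y) (v y) with hℓ
  have hℓs : ContDiff ℝ (⊤ : ℕ∞) ℓ := (hH.comp hp₀).sub (hp₀.inner ℝ hvs)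
  have hℓd : ∀ y, HasFDerivAt ℓ (-(innerSL ℝ (p₀ y) ∘L fderiv ℝ v y)) y := by
    intro y
    have h1 := ((hHV (p₀ y)).comp y (hpd y).hasFDerivAt).sub
      ((hpd y).hasFDerivAt.inner ℝ (hvd y).hasFDerivAt)
    convert! h1 using 1
    ext w
    simp [hv, real_inner_comm]
  set Φ : ℝ × E → ℝ := fun z => f z.2 + z.1 * ℓ z.2 with hΦ
  have hΦs : ContDiff ℝ (⊤ : ℕ∞) Φ :=
    (hf.comp contDiff_snd).add (contDiff_fst.mul (hℓs.comp contDiff_snd))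
  refine ⟨((K : ℝ) + 1)⁻¹, by positivity, fun z => Φ (z.1, Y z.1 z.2), ?_, ?_⟩
  · intro x
    have := congrArg Prod.snd (hY 0 (by simp) x)
    simp only [characteristicMap, zero_smul, sub_zero] at this
    simp [hΦ, this]
  · intro t x ht
    have ht' := hK ht
    set y := Y t x
    have hGy : characteristicMap v (t, y) = (t, x) := hY t ht' x
    have hGd := hasFDerivAt_characteristicMap t y (hvd y)
    set G' := (ContinuousLinearMap.fst ℝ ℝ E).prod (ContinuousLinearMap.snd ℝ ℝ E -
        (t • (fderiv ℝ v y ∘L ContinuousLinearMap.snd ℝ ℝ E) +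
          (ContinuousLinearMap.fst ℝ ℝ E).smulRight (v y))) with hG'
    have hinj : Function.Injective G'.toLinearMap := by
      rw [← LinearMap.ker_eq_bot, LinearMap.ker_eq_bot']
      rintro ⟨s, w⟩ h
      obtain ⟨h1, h2⟩ := Prod.ext_iff.1 h
      simp [hG'] at h1 h2
      subst h1
      simp only [zero_smul, add_zero, sub_eq_zero] at h2
      have h3 : ‖w‖ ≤ |t| * (K * ‖w‖) := by
        conv_lhs => rw [h2, norm_smul, Real.norm_eq_abs]
        gcongr
        exact (fderiv ℝ v y).le_of_opNorm_le (norm_fderiv_le_of_lipschitz ℝ hL) w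
      have h4 : ‖w‖ = 0 := by
        have := norm_nonneg w
        nlinarith
      simp [norm_eq_zero.1 h4]
    set e : (ℝ × E) ≃L[ℝ] (ℝ × E) :=
      (LinearEquiv.ofInjectiveEndo G'.toLinearMap hinj).toContinuousLinearEquiv
    have heG : (e : ℝ × E →L[ℝ] ℝ × E) = G' := by
      ext z <;> rfl
    rw [← heG] at hGd
    have hn : ((⊤ : ℕ∞) : WithTop ℕ∞) ≠ 0 := by simp
    have hGa := hGs.contDiffAt (x := (t, y))
    have hGst := hGa.hasStrictFDerivAt' hGd hn
    set g := hGst.localInverse _ e _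
    have hgs : ContDiffAt ℝ (⊤ : ℕ∞) g (t, x) := hGy ▸ hGa.to_localInverse hGd hn
    have hgd : HasFDerivAt g (e.symm : ℝ × E →L[ℝ] ℝ × E) (t, x) :=
      hGy ▸ hGst.to_localInverse.hasFDerivAt
    have hgx : g (t, x) = (t, y) := hGy ▸ hGst.localInverse_apply_image
    have hright : ∀ᶠ z in nhds (t, x), characteristicMap v (g z) = z :=
      hGy ▸ hGst.eventually_right_inverse
    have hnear : ∀ᶠ z : ℝ × E in nhds (t, x), |z.1| * K < 1 :=
      (isOpen_lt (by fun_prop) continuous_const).mem_nhds ht'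
    have heq : (fun z : ℝ × E => Φ (z.1, Y z.1 z.2)) =ᶠ[nhds (t, x)] Φ ∘ g := by
      filter_upwards [hright, hnear] with z hz hz1
      exact congrArg Φ (characteristicMap_injOn hL hz1 ((hY z.1 hz1 z.2).trans hz.symm))
    refine ⟨?_, p₀ y, ?_⟩
    · exact (hΦs.contDiffAt.comp _ hgs).congr_of_eventuallyEq heq
    · have hΦd : HasFDerivAt Φ (spaceTimeForm (H (p₀ y)) (p₀ y) ∘L G') (g (t, x)) := by
        rw [hgx]
        have h1 : HasFDerivAt (fun z : ℝ × E => f z.2) (innerSL ℝ (p₀ y) ∘L .snd ℝ ℝ E) (t, y) :=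
          (hfp y).comp (t, y) hasFDerivAt_snd
        have h2 : HasFDerivAt (fun z : ℝ × E => ℓ z.2)
            ((-(innerSL ℝ (p₀ y) ∘L fderiv ℝ v y)) ∘L .snd ℝ ℝ E) (t, y) :=
          HasFDerivAt.comp (g := ℓ) (f := Prod.snd) (t, y) (hℓd y) hasFDerivAt_snd
        have h3 := h1.add ((hasFDerivAt_fst (𝕜 := ℝ) (p := (t, y))).mul h2)
        convert! h3 using 1
        ext w <;> simp [hG', hℓ, inner_sub_right, inner_smul_right] <;> ring
      have h4 := (hΦd.comp _ hgd).congr_of_eventuallyEq heq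
      convert! h4 using 1
      rw [← heG]
      ext <;> simp

theorem contDiff_relEnergy : ContDiff ℝ (⊤ : ℕ∞) (relEnergy : E → ℝ) :=
  (contDiff_const.add (contDiff_norm_sq ℝ)).sqrt fun p => by positivity

theorem hasFDerivAt_relEnergy (p : E) :
    HasFDerivAt relEnergy (innerSL ℝ ((relEnergy p)⁻¹ • p)) p := by
  have h : HasFDerivAt (fun p : E => ‖p‖ ^ 2) (2 • innerSL ℝ p) p :=
    (hasStrictFDerivAt_norm_sq p).hasFDerivAt
  have h1 := (h.const_add 1).sqrt (by positivity)
  convert! h1 using 1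
  ext w
  simp [relEnergy]
  ring

theorem lipschitzWith_relVelocity :
    LipschitzWith 2 (fun p : E => (relEnergy p)⁻¹ • p) := by
  refine LipschitzWith.of_dist_le_mul fun p q => ?_
  have hp := relEnergy_pos p
  have hq := relEnergy_pos q
  have hsplit : (relEnergy p)⁻¹ • p - (relEnergy q)⁻¹ • q
      = (relEnergy p)⁻¹ • (p - q)
        + ((relEnergy p)⁻¹ * (relEnergy q - relEnergy p)) • (relEnergy q)⁻¹ • q := by
    have : (relEnergy q)⁻¹ = (relEnergy p)⁻¹
        - (relEnergy p)⁻¹ * (relEnergy q - relEnergy p) * (relEnergy q)⁻¹ := by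
      field_simp
      ring
    nth_rewrite 1 [this]
    module
  have h1 : ‖(relEnergy p)⁻¹‖ ≤ 1 := by
    rw [norm_inv, Real.norm_of_nonneg hp.le]
    exact inv_le_one_of_one_le₀ (one_le_relEnergy p)
  have h2 : ‖(relEnergy q)⁻¹ • q‖ ≤ 1 := by
    rw [norm_smul, norm_inv, Real.norm_of_nonneg hq.le, inv_mul_le_one₀ hq]
    exact norm_le_relEnergy q
  have h3 : ‖relEnergy q - relEnergy p‖ ≤ ‖p - q‖ := by
    simpa [norm_sub_rev q p] using lipschitzWith_relEnergy.norm_sub_le q p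
  rw [dist_eq_norm, dist_eq_norm, hsplit]
  calc _ ≤ ‖(relEnergy p)⁻¹‖ * ‖p - q‖
        + ‖(relEnergy p)⁻¹‖ * ‖relEnergy q - relEnergy p‖ * ‖(relEnergy q)⁻¹ • q‖ := by
        refine (norm_add_le _ _).trans ?_
        rw [norm_smul, norm_smul _ ((relEnergy q)⁻¹ • q), norm_mul]
    _ ≤ 1 * ‖p - q‖ + 1 * ‖p - q‖ * 1 := by gcongr
    _ = (2 : NNReal) * ‖p - q‖ := by norm_num; ring

end HamiltonJacobi

section Coordinates

variable {ι : Type*} [Fintype ι]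

theorem sum_spaceTimeForm_single_sq [DecidableEq ι] (a : ℝ) (p : EuclideanSpace ℝ ι) :
    ∑ k, spaceTimeForm a p (0, EuclideanSpace.single k 1) ^ 2 = ‖p‖ ^ 2 := by
  simp [EuclideanSpace.norm_sq_eq, EuclideanSpace.inner_single_right]

theorem DifferentiableAt.hasFDerivAt_spaceTimeForm {φ : ℝ × EuclideanSpace ℝ ι → ℝ}
    {z : ℝ × EuclideanSpace ℝ ι} (h : DifferentiableAt ℝ φ z) :
    ∃ p, HasFDerivAt φ (spaceTimeForm (fderiv ℝ φ z (1, 0)) p) z := by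
  refine ⟨(InnerProductSpace.toDual ℝ _).symm
    (fderiv ℝ φ z ∘L ContinuousLinearMap.inr ℝ ℝ (EuclideanSpace ℝ ι)), ?_⟩
  convert! h.hasFDerivAt using 1
  ext <;> simp

/-- Local existence and uniqueness for `∂ₜφ = σ √(1 + |∇φ|²)` with a sign `σ`. -/
theorem eikonal_local_existence_uniqueness [DecidableEq ι] {σ : ℝ} (hσ : |σ| = 1)
    {φI : EuclideanSpace ℝ ι → ℝ} (hφI : ContDiff ℝ (⊤ : ℕ∞) φI) {C : ℝ}
    (hHess : ∀ x, ‖fderiv ℝ (fun y => fderiv ℝ φI y) x‖ ≤ C) :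
    ∃ T : ℝ, 0 < T ∧ ∃ φ : ℝ × EuclideanSpace ℝ ι → ℝ,
      ContDiffOn ℝ (⊤ : ℕ∞) φ (Ico (0 : ℝ) T ×ˢ univ) ∧
      (∀ p ∈ Ico (0 : ℝ) T ×ˢ (univ : Set (EuclideanSpace ℝ ι)),
        fderiv ℝ φ p (1, 0)
          = σ * Real.sqrt (1 + ∑ k, fderiv ℝ φ p (0, EuclideanSpace.single k 1) ^ 2)) ∧
      (∀ x, φ (0, x) = φI x) ∧
      (∀ p ∈ Ico (0 : ℝ) T ×ˢ (univ : Set (EuclideanSpace ℝ ι)),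
        fderiv ℝ φ p (1, 0) ^ 2
          - ∑ k, fderiv ℝ φ p (0, EuclideanSpace.single k 1) ^ 2 = 1) ∧
      (∀ ψ : ℝ × EuclideanSpace ℝ ι → ℝ,
        (∀ p ∈ Ico (0 : ℝ) T ×ˢ (univ : Set (EuclideanSpace ℝ ι)),
          fderiv ℝ ψ p (1, 0)
            = σ * Real.sqrt (1 + ∑ k, fderiv ℝ ψ p (0, EuclideanSpace.single k 1) ^ 2)) →
        (∀ x, ψ (0, x) = φI x) →
        EqOn ψ φ (Ico (0 : ℝ) T ×ˢ univ)) := by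
  set J := (InnerProductSpace.toDual ℝ (EuclideanSpace ℝ ι)).symm with hJ
  set p₀ : EuclideanSpace ℝ ι → EuclideanSpace ℝ ι := fun y => J (fderiv ℝ φI y) with hp₀
  have hφd : ContDiff ℝ (⊤ : ℕ∞) (fun y => fderiv ℝ φI y) := hφI.fderiv_right (by simp)
  have hLip : LipschitzWith C.toNNReal p₀ := by
    have h : LipschitzWith C.toNNReal (fun y => fderiv ℝ φI y) :=
      lipschitzWith_of_nnnorm_fderiv_le (hφd.differentiable (by simp)) fun x =>
        NNReal.coe_le_coe.1 ((hHess x).trans (Real.le_coe_toNNReal C))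
    have h' := J.lipschitz.comp h
    rwa [one_mul] at h'
  have hVLip : LipschitzWith 2 (fun p : EuclideanSpace ℝ ι => σ • (relEnergy p)⁻¹ • p) := by
    have h : LipschitzWith 1 (fun p : EuclideanSpace ℝ ι => σ • p) :=
      LipschitzWith.of_dist_le_mul fun p q => by
        rw [dist_smul₀, Real.norm_eq_abs, hσ, NNReal.coe_one]
    have h' := h.comp lipschitzWith_relVelocity
    rwa [one_mul] at h'
  have hHLip : LipschitzWith 1 (fun p : EuclideanSpace ℝ ι => σ * relEnergy p) := by
    refine LipschitzWith.of_dist_le_mul fun p q => ?_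
    rw [← smul_eq_mul, ← smul_eq_mul, dist_smul₀, Real.norm_eq_abs, hσ, one_mul]
    exact lipschitzWith_relEnergy.dist_le_mul p q
  obtain ⟨T, hT, φ, hφ0, hφ⟩ := exists_hamiltonJacobi_solution
    (H := fun p => σ * relEnergy p) (f := φI) (p₀ := p₀)
    (V := fun p : EuclideanSpace ℝ ι => σ • (relEnergy p)⁻¹ • p)
    (fun p => by simpa using (hasFDerivAt_relEnergy p).const_mul σ)
    (fun y => by
      convert! (hφI.differentiable (by simp) y).hasFDerivAt using 1
      ext w
      simp [hp₀, hJ])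
    (contDiff_const.mul contDiff_relEnergy) hφI
    (((contDiff_relEnergy.inv fun p => (relEnergy_pos p).ne').smul contDiff_id).const_smul σ)
    (J.toContinuousLinearEquiv.contDiff.comp hφd) (hVLip.comp hLip)
  have habs : ∀ {t : ℝ}, t ∈ Ico 0 T → |t| < T := fun ht => by
    rw [abs_of_nonneg ht.1]
    exact ht.2
  have heq : ∀ p ∈ Ico (0 : ℝ) T ×ˢ (univ : Set (EuclideanSpace ℝ ι)),
      fderiv ℝ φ p (1, 0)
        = σ * Real.sqrt (1 + ∑ k, fderiv ℝ φ p (0, EuclideanSpace.single k 1) ^ 2) := by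
    rintro ⟨t, x⟩ ⟨ht, -⟩
    obtain ⟨p, hp⟩ := (hφ t x (habs ht)).2
    rw [hp.fderiv, sum_spaceTimeForm_single_sq]
    simp [relEnergy]
  refine ⟨T, hT, φ, ?_, heq, hφ0, ?_, ?_⟩
  · rintro ⟨t, x⟩ ⟨ht, -⟩
    exact (hφ t x (habs ht)).1.contDiffWithinAt
  · intro p hp
    rw [heq p hp, mul_pow, ← sq_abs, hσ, Real.sq_sqrt (by positivity)]
    ring
  · intro ψ hψ hψ0
    refine hamiltonJacobi_eqOn hHLip (fun t ht x => (hφ t x (habs ht)).2) ?_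
      fun x => (hψ0 x).trans (hφ0 x).symm
    intro t ht x
    have h := hψ (t, x) ⟨ht, mem_univ x⟩
    -- the equation forces differentiability, since otherwise `fderiv` vanishes
    have hd : DifferentiableAt ℝ ψ (t, x) := by
      by_contra hnd
      rw [fderiv_zero_of_not_differentiableAt hnd] at h
      have := congrArg abs h
      simp [hσ] at this
    obtain ⟨p, hp⟩ := hd.hasFDerivAt_spaceTimeForm
    refine ⟨p, ?_⟩
    convert! hp using 2
    rw [h, hp.fderiv, sum_spaceTimeForm_single_sq, relEnergy]

end Coordinates

/-- Local existence and uniqueness of smooth solutions of the relativistic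
    Hamilton–Jacobi (eikonal) equation ∂ₜφ = ±√(1+|∇φ|²) with smooth initial
    datum having uniformly bounded Hessian; in particular the solution
    satisfies the Klein–Gordon eikonal relation (∂ₜφ)² − |∇φ|² = 1 on the
    slab [0,T) × ℝ³. -/
theorem hamilton_jacobi_local_existence_uniqueness
    (φI : EuclideanSpace ℝ (Fin 3) → ℝ) (hφI : ContDiff ℝ (⊤ : ℕ∞) φI)
    (C : ℝ)
    (hHess : ∀ x : EuclideanSpace ℝ (Fin 3),
      ‖fderiv ℝ (fun y => fderiv ℝ φI y) x‖ ≤ C) :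
    (∃ T : ℝ, 0 < T ∧ ∃ φ : ℝ × EuclideanSpace ℝ (Fin 3) → ℝ,
      ContDiffOn ℝ (⊤ : ℕ∞) φ (Ico (0 : ℝ) T ×ˢ univ) ∧
      (∀ p ∈ Ico (0 : ℝ) T ×ˢ (univ : Set (EuclideanSpace ℝ (Fin 3))),
        fderiv ℝ φ p (1, 0)
          = Real.sqrt (1 + ∑ k, fderiv ℝ φ p (0, EuclideanSpace.single k 1) ^ 2)) ∧
      (∀ x, φ (0, x) = φI x) ∧
      (∀ p ∈ Ico (0 : ℝ) T ×ˢ (univ : Set (EuclideanSpace ℝ (Fin 3))),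
        fderiv ℝ φ p (1, 0) ^ 2
          - ∑ k, fderiv ℝ φ p (0, EuclideanSpace.single k 1) ^ 2 = 1) ∧
      (∀ ψ : ℝ × EuclideanSpace ℝ (Fin 3) → ℝ,
        ContDiffOn ℝ (⊤ : ℕ∞) ψ (Ico (0 : ℝ) T ×ˢ univ) →
        (∀ p ∈ Ico (0 : ℝ) T ×ˢ (univ : Set (EuclideanSpace ℝ (Fin 3))),
          fderiv ℝ ψ p (1, 0)
            = Real.sqrt (1 + ∑ k, fderiv ℝ ψ p (0, EuclideanSpace.single k 1) ^ 2)) →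
        (∀ x, ψ (0, x) = φI x) →
        EqOn ψ φ (Ico (0 : ℝ) T ×ˢ univ))) ∧
    (∃ T : ℝ, 0 < T ∧ ∃ φ : ℝ × EuclideanSpace ℝ (Fin 3) → ℝ,
      ContDiffOn ℝ (⊤ : ℕ∞) φ (Ico (0 : ℝ) T ×ˢ univ) ∧
      (∀ p ∈ Ico (0 : ℝ) T ×ˢ (univ : Set (EuclideanSpace ℝ (Fin 3))),
        fderiv ℝ φ p (1, 0)
          = -Real.sqrt (1 + ∑ k, fderiv ℝ φ p (0, EuclideanSpace.single k 1) ^ 2)) ∧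
      (∀ x, φ (0, x) = φI x) ∧
      (∀ p ∈ Ico (0 : ℝ) T ×ˢ (univ : Set (EuclideanSpace ℝ (Fin 3))),
        fderiv ℝ φ p (1, 0) ^ 2
          - ∑ k, fderiv ℝ φ p (0, EuclideanSpace.single k 1) ^ 2 = 1) ∧
      (∀ ψ : ℝ × EuclideanSpace ℝ (Fin 3) → ℝ,
        ContDiffOn ℝ (⊤ : ℕ∞) ψ (Ico (0 : ℝ) T ×ˢ univ) →
        (∀ p ∈ Ico (0 : ℝ) T ×ˢ (univ : Set (EuclideanSpace ℝ (Fin 3))),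
          fderiv ℝ ψ p (1, 0)
            = -Real.sqrt (1 + ∑ k, fderiv ℝ ψ p (0, EuclideanSpace.single k 1) ^ 2)) →
        (∀ x, ψ (0, x) = φI x) →
        EqOn ψ φ (Ico (0 : ℝ) T ×ˢ univ))) := by
  refine ⟨?_, ?_⟩
  · obtain ⟨T, hT, φ, h1, h2, h3, h4, h5⟩ :=
      eikonal_local_existence_uniqueness (σ := 1) (by simp) hφI hHess
    simp only [one_mul] at h2 h5
    exact ⟨T, hT, φ, h1, h2, h3, h4, fun ψ _ => h5 ψ⟩
  · obtain ⟨T, hT, φ, h1, h2, h3, h4, h5⟩ :=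
      eikonal_local_existence_uniqueness (σ := -1) (by simp) hφI hHess
    simp only [neg_one_mul] at h2 h5
    exact ⟨T, hT, φ, h1, h2, h3, h4, fun ψ _ => h5 ψ⟩

end
end

section
/- Let f : ℝ × ℝ³ → ℝ be smooth and compactly supported, and for t > 0, x ∈ ℝ³ define the retarded potential V(t,x) = (1/(4π)) ∫_{{y : |x−y| ≤ t}} f(t − |x−y|, y)/|x−y| dy. Then V is twice continuously differentiable on (0,∞) × ℝ³ and solves the inhomogeneous wave equation ∂ₜ²V − ΔV = f there, with vanishing Cauchy data: V(t,x) → 0 and ∂ₜV(t,x) → 0 as t → 0⁺, locally uniformly in x. -/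
noncomputable section

open Set MeasureTheory

section ParametricIntegral

universe u

variable {H X G : Type u} [NormedAddCommGroup H] [NormedSpace ℝ H] [FiniteDimensional ℝ H]
  [NormedAddCommGroup X] [NormedSpace ℝ X] [FiniteDimensional ℝ X]
  [MeasurableSpace X] [BorelSpace X]
  {μ : Measure X} [IsFiniteMeasure μ] {K : Set X}

/-- A continuous function is integrable against a finite measure carried by a compact set. -/
theorem Continuous.integrable_of_ae_mem_isCompact {G : Type*} [NormedAddCommGroup G]
    {g : X → G} (hg : Continuous g)
    (hK : IsCompact K) (hμ : ∀ᵐ a ∂μ, a ∈ K) : Integrable g μ := by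
  obtain ⟨C, hC⟩ := hK.exists_bound_of_continuousOn hg.continuousOn
  have : ProperSpace X := FiniteDimensional.proper ℝ X
  exact Integrable.of_bound hg.aestronglyMeasurable C (hμ.mono hC)

variable [NormedAddCommGroup G] [NormedSpace ℝ G]

theorem hasFDerivAt_integral_of_contDiff {F : H × X → G} (hF : ContDiff ℝ 1 F)
    (hK : IsCompact K) (hμ : ∀ᵐ a ∂μ, a ∈ K) (p : H) :
    HasFDerivAt (fun p => ∫ a, F (p, a) ∂μ)
      (∫ a, (fderiv ℝ F (p, a)).comp (ContinuousLinearMap.inl ℝ H X) ∂μ) p := by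
  have : ProperSpace H := FiniteDimensional.proper ℝ H
  have : ProperSpace X := FiniteDimensional.proper ℝ X
  have hF' : Continuous fun q => (fderiv ℝ F q).comp (ContinuousLinearMap.inl ℝ H X) :=
    (hF.continuous_fderiv one_ne_zero).clm_comp continuous_const
  obtain ⟨C, hC⟩ := ((isCompact_closedBall p 1).prod hK).exists_bound_of_continuousOn
    hF'.continuousOn
  refine hasFDerivAt_integral_of_dominated_of_fderiv_le
    (F := fun p a => F (p, a))
    (F' := fun p a => (fderiv ℝ F (p, a)).comp (ContinuousLinearMap.inl ℝ H X))
    (bound := fun _ => C) (Metric.closedBall_mem_nhds p one_pos) ?_ ?_ ?_ ?_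
    (integrable_const C) ?_
  · exact .of_forall fun q => (hF.continuous.comp (by fun_prop)).aestronglyMeasurable
  · exact (hF.continuous.comp (by fun_prop : Continuous fun a => (p, a))
      ).integrable_of_ae_mem_isCompact hK hμ
  · exact (hF'.comp (by fun_prop : Continuous fun a => (p, a))).aestronglyMeasurable
  · exact hμ.mono fun a ha q hq => hC (q, a) ⟨hq, ha⟩
  · refine .of_forall fun a q _ => ?_
    exact ((hF.differentiable one_ne_zero) (q, a)).hasFDerivAt.comp q
      (hasFDerivAt_prodMk_left q a)

theorem fderiv_integral_of_contDiff_apply [CompleteSpace G] {F : H × X → G} (hF : ContDiff ℝ 1 F)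
    (hK : IsCompact K) (hμ : ∀ᵐ a ∂μ, a ∈ K) (p v : H) :
    fderiv ℝ (fun p => ∫ a, F (p, a) ∂μ) p v = ∫ a, fderiv ℝ F (p, a) (v, 0) ∂μ := by
  rw [(hasFDerivAt_integral_of_contDiff hF hK hμ p).fderiv, ContinuousLinearMap.integral_apply]
  · rfl
  · have hF' : Continuous fun q => (fderiv ℝ F q).comp (ContinuousLinearMap.inl ℝ H X) :=
      (hF.continuous_fderiv one_ne_zero).clm_comp continuous_const
    exact (hF'.comp (by fun_prop : Continuous fun a => (p, a))).integrable_of_ae_mem_isCompact hK hμ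

theorem contDiff_integral_of_contDiff_nat (hK : IsCompact K) (hμ : ∀ᵐ a ∂μ, a ∈ K) (n : ℕ) :
    ∀ {G : Type u} [NormedAddCommGroup G] [NormedSpace ℝ G] {F : H × X → G},
      ContDiff ℝ (n + 1 : ℕ) F → ContDiff ℝ n fun p => ∫ a, F (p, a) ∂μ := by
  induction n with
  | zero =>
    intro G _ _ F hF
    refine contDiff_zero.2 (Differentiable.continuous (𝕜 := ℝ) fun p => ?_)
    exact (hasFDerivAt_integral_of_contDiff (by simpa using hF) hK hμ p).differentiableAt
  | succ n ih =>
    intro G _ _ F hF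
    have h1 : ContDiff ℝ 1 F := hF.of_le (by norm_cast; omega)
    have hd := fun p => hasFDerivAt_integral_of_contDiff h1 hK hμ p
    push_cast
    refine contDiff_succ_iff_fderiv.2 ⟨fun p => (hd p).differentiableAt, by simp, ?_⟩
    rw [funext fun p => (hd p).fderiv]
    exact ih (F := fun q => (fderiv ℝ F q).comp (ContinuousLinearMap.inl ℝ H X))
      ((hF.fderiv_right (by norm_cast)).clm_comp contDiff_const)

theorem contDiff_integral_of_contDiff {F : H × X → G} (hF : ContDiff ℝ (⊤ : ℕ∞) F)
    (hK : IsCompact K) (hμ : ∀ᵐ a ∂μ, a ∈ K) :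
    ContDiff ℝ (⊤ : ℕ∞) fun p => ∫ a, F (p, a) ∂μ :=
  contDiff_infty.2 fun n => contDiff_integral_of_contDiff_nat hK hμ n (hF.of_le (by
    exact_mod_cast le_top))

end ParametricIntegral

section Duhamel

variable {E : Type} [NormedAddCommGroup E] [NormedSpace ℝ E]

/-- The Duhamel integral `∫ τ in 0..t, Q (τ, (t, x))`, rescaled to the unit interval. -/
def duhamel (Q : ℝ × (ℝ × E) → ℝ) (p : ℝ × E) : ℝ :=
  ∫ r in Icc (0 : ℝ) 1, p.1 * Q (p.1 * r, p)

variable [FiniteDimensional ℝ E] {Q : ℝ × (ℝ × E) → ℝ}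

theorem contDiff_duhamel (hQ : ContDiff ℝ (⊤ : ℕ∞) Q) : ContDiff ℝ (⊤ : ℕ∞) (duhamel Q) :=
  contDiff_integral_of_contDiff (F := fun q : (ℝ × E) × ℝ => q.1.1 * Q (q.1.1 * q.2, q.1))
    (by fun_prop) isCompact_Icc (ae_restrict_mem measurableSet_Icc)

/-- The Leibniz rule for the Duhamel integral. -/
theorem fderiv_duhamel (hQ : ContDiff ℝ (⊤ : ℕ∞) Q) (p w : ℝ × E) :
    fderiv ℝ (duhamel Q) p w
      = w.1 * Q (p.1, p) + duhamel (fun q => fderiv ℝ Q q (0, w)) p := by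
  have hQd : Differentiable ℝ Q := hQ.differentiable (by simp)
  have hQc : Continuous Q := hQ.continuous
  have hQ' : Continuous (fderiv ℝ Q) := hQ.continuous_fderiv (by simp)
  have hF : ContDiff ℝ 1 fun q : (ℝ × E) × ℝ => q.1.1 * Q (q.1.1 * q.2, q.1) := by
    have := hQ.of_le (by exact_mod_cast le_top : (1 : WithTop ℕ∞) ≤ (⊤ : ℕ∞))
    fun_prop
  have hderiv (r : ℝ) : fderiv ℝ (fun q : (ℝ × E) × ℝ => q.1.1 * Q (q.1.1 * q.2, q.1)) (p, r) (w, 0)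
      = w.1 * (Q (p.1 * r, p) + r * (p.1 * fderiv ℝ Q (p.1 * r, p) (1, 0)))
        + p.1 * fderiv ℝ Q (p.1 * r, p) (0, w) := by
    have h11 : HasFDerivAt (𝕜 := ℝ) (fun q : (ℝ × E) × ℝ => q.1.1) _ (p, r) :=
      ((ContinuousLinearMap.fst ℝ ℝ E).comp
        (ContinuousLinearMap.fst ℝ (ℝ × E) ℝ)).hasFDerivAt
    have h2 : HasFDerivAt (𝕜 := ℝ) (fun q : (ℝ × E) × ℝ => q.2) _ (p, r) := hasFDerivAt_snd
    have h1 : HasFDerivAt (𝕜 := ℝ) (fun q : (ℝ × E) × ℝ => q.1) _ (p, r) := hasFDerivAt_fst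
    have : HasFDerivAt (fun q : (ℝ × E) × ℝ => q.1.1 * Q (q.1.1 * q.2, q.1)) _ (p, r) :=
      h11.mul ((hQd (p.1 * r, p)).hasFDerivAt.comp (p, r) ((h11.mul h2).prodMk h1))
    have hsplit : ((w.1 * r, w) : ℝ × (ℝ × E)) = (w.1 * r) • (1, 0) + (0, w) := by simp
    rw [this.fderiv]
    simp [mul_comm r, hsplit, -Prod.mk_add_mk, -Prod.smul_mk]
    ring
  have hftc : ∫ r in Icc (0 : ℝ) 1, (Q (p.1 * r, p) + r * (p.1 * fderiv ℝ Q (p.1 * r, p) (1, 0)))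
      = Q (p.1, p) := by
    rw [integral_Icc_eq_integral_Ioc, ← intervalIntegral.integral_of_le zero_le_one,
      intervalIntegral.integral_eq_sub_of_hasDerivAt (f := fun r => r * Q (p.1 * r, p))]
    · simp
    · intro r _
      have h : HasDerivAt (fun r : ℝ => (p.1 * r, p)) (p.1, 0) r := by
        simpa using ((hasDerivAt_id r).const_mul p.1).prodMk (hasDerivAt_const r p)
      have : HasDerivAt (fun r => r * Q (p.1 * r, p)) _ r :=
        (hasDerivAt_id r).mul ((hQd (p.1 * r, p)).hasFDerivAt.comp_hasDerivAt r h)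
      refine this.congr_deriv ?_
      have hs : ((p.1, 0) : ℝ × (ℝ × E)) = p.1 • (1, 0) := by simp
      rw [hs, map_smul]
      simp
    · exact Continuous.intervalIntegrable (by fun_prop) _ _
  have hint {g : ℝ → ℝ} (hg : Continuous g) : IntegrableOn g (Icc 0 1) :=
    hg.continuousOn.integrableOn_Icc
  unfold duhamel
  rw [fderiv_integral_of_contDiff_apply hF isCompact_Icc (ae_restrict_mem measurableSet_Icc)]
  simp_rw [hderiv]
  rw [integral_add (hint (by fun_prop)) (hint (by fun_prop)), integral_const_mul, hftc]

end Duhamel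

section SphereMeasure

local notation "E3" => EuclideanSpace ℝ (Fin 3)

/-- The surface measure of the unit sphere, as a measure on the ambient space. -/
def sphereMeasure : Measure (EuclideanSpace ℝ (Fin 3)) :=
  (volume : Measure (EuclideanSpace ℝ (Fin 3))).toSphere.map (↑)

instance : IsFiniteMeasure sphereMeasure := by
  unfold sphereMeasure
  infer_instance

theorem ae_sphereMeasure_mem : ∀ᵐ ω ∂sphereMeasure, ω ∈ Metric.sphere (0 : E3) 1 := by
  unfold sphereMeasure
  exact (ae_map_iff measurable_subtype_coe.aemeasurable
    Metric.isClosed_sphere.measurableSet).2 (.of_forall fun ω => ω.2)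

theorem sphereMeasure_real_univ : sphereMeasure.real univ = 4 * Real.pi := by
  unfold sphereMeasure
  rw [map_measureReal_apply measurable_subtype_coe .univ, preimage_univ,
    Measure.toSphere_real_apply_univ]
  have : 0 ≤ Real.pi * 4 / 3 := by positivity
  simp [Measure.real, EuclideanSpace.volume_ball_fin_three, ENNReal.toReal_ofReal this]
  ring

open scoped Pointwise in
theorem map_sphereMeasure (R : E3 ≃ₗᵢ[ℝ] E3) : sphereMeasure.map R = sphereMeasure := by
  ext s hs
  have hR : Measurable R := R.continuous.measurable
  unfold sphereMeasure
  rw [Measure.map_apply hR hs, Measure.map_apply measurable_subtype_coe (hR hs),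
    Measure.map_apply measurable_subtype_coe hs,
    Measure.toSphere_apply' _ (measurable_subtype_coe (hR hs)),
    Measure.toSphere_apply' _ (measurable_subtype_coe hs)]
  congr 1
  rw [← (R.symm.measurePreserving).measure_preimage_equiv (f := R.symm.toMeasurableEquiv)]
  congr 1
  ext z
  simp only [mem_smul, Subtype.image_preimage_coe, mem_preimage, mem_inter_iff, Metric.mem_sphere,
    dist_zero_right]
  constructor
  · rintro ⟨r, hr, y, ⟨hy, hys⟩, h⟩
    refine ⟨r, hr, R y, ⟨by simpa using hy, hys⟩, R.symm.injective ?_⟩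
    simpa using h
  · rintro ⟨r, hr, y, ⟨hy, hys⟩, rfl⟩
    exact ⟨r, hr, R.symm y, ⟨by simpa using hy, by simpa using hys⟩,
      by simp [LinearIsometryEquiv.toMeasurableEquiv]⟩

/-- The sphere measure annihilates the derivatives along infinitesimal rotations. -/
theorem integral_fderiv_skew_sphereMeasure {h : E3 → ℝ} (hh : ContDiff ℝ (⊤ : ℕ∞) h)
    {J : E3 →L[ℝ] E3} (hJ : J ∈ skewAdjoint (E3 →L[ℝ] E3)) :
    ∫ ω, fderiv ℝ h ω (J ω) ∂sphereMeasure = 0 := by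
  let _ : NormedAlgebra ℚ (E3 →L[ℝ] E3) := NormedAlgebra.restrictScalars ℚ ℝ _
  have hexp0 : NormedSpace.exp ((0 : ℝ) • J) = 1 := by
    rw [zero_smul ℝ J, NormedSpace.exp_zero]
  have hexp : ContDiff ℝ 1 fun θ : ℝ => NormedSpace.exp (θ • J) := by
    have : ContDiff ℝ 1 (NormedSpace.exp : (E3 →L[ℝ] E3) → _) :=
      contDiff_iff_contDiffAt.2 fun x => (NormedSpace.exp_analytic (𝕂 := ℝ) x).contDiffAt
    exact this.comp (by fun_prop)
  have hh1 : ContDiff ℝ 1 h := hh.of_le (by exact_mod_cast le_top)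
  have hF : ContDiff ℝ 1 fun q : ℝ × E3 => h (NormedSpace.exp (q.1 • J) q.2) :=
    hh1.comp ((hexp.comp contDiff_fst).clm_apply contDiff_snd)
  have hconst : (fun θ : ℝ => ∫ ω, h (NormedSpace.exp (θ • J) ω) ∂sphereMeasure)
      = fun _ => ∫ ω, h ω ∂sphereMeasure := by
    funext θ
    have hu : NormedSpace.exp (θ • J) ∈ unitary (E3 →L[ℝ] E3) :=
      NormedSpace.exp_mem_unitary_of_mem_skewAdjoint (skewAdjoint.smul_mem θ hJ)
    let R : E3 ≃ₗᵢ[ℝ] E3 := Unitary.linearIsometryEquiv ⟨_, hu⟩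
    have hR (ω : E3) : NormedSpace.exp (θ • J) ω = R ω := rfl
    simp_rw [hR]
    conv_rhs => rw [← map_sphereMeasure R]
    rw [integral_map R.continuous.aemeasurable hh.continuous.aestronglyMeasurable]
  have hd := fderiv_integral_of_contDiff_apply hF (isCompact_sphere (0 : E3) 1)
    ae_sphereMeasure_mem (0 : ℝ) 1
  simp only at hd
  rw [hconst, fderiv_const_apply] at hd
  simp only [zero_apply] at hd
  rw [hd]
  congr 1 with ω
  have h1 : HasDerivAt (fun θ : ℝ => NormedSpace.exp (θ • J) ω) (J ω) 0 := by
    simpa [hexp0] using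
      (hasDerivAt_exp_smul_const (𝕂 := ℝ) J (0 : ℝ)).clm_apply (hasDerivAt_const 0 ω)
  have h2 : HasDerivAt (fun θ : ℝ => h (NormedSpace.exp (θ • J) ω)) (fderiv ℝ h ω (J ω)) 0 := by
    have := (hh1.differentiable one_ne_zero (NormedSpace.exp ((0 : ℝ) • J) ω)
      ).hasFDerivAt.comp_hasDerivAt (0 : ℝ) h1
    rw [hexp0] at this
    exact this
  have h3 : HasDerivAt (fun θ : ℝ => (θ, ω)) ((1 : ℝ), (0 : E3)) 0 :=
    (hasDerivAt_id (0 : ℝ)).prodMk (hasDerivAt_const 0 ω)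
  exact h2.unique (HasFDerivAt.comp_hasDerivAt
    (l := fun q : ℝ × E3 => h (NormedSpace.exp (q.1 • J) q.2)) (0 : ℝ)
    (hF.differentiable one_ne_zero ((0 : ℝ), ω)).hasFDerivAt h3)

end SphereMeasure

section SphericalMeans

local notation "E3" => EuclideanSpace ℝ (Fin 3)

/-- The generator of rotations in the `i`-`j` coordinate plane. -/
def rotationGenerator (i j : Fin 3) : E3 →L[ℝ] E3 :=
  (EuclideanSpace.proj i : E3 →L[ℝ] ℝ).smulRight (EuclideanSpace.single j 1)
    - (EuclideanSpace.proj j : E3 →L[ℝ] ℝ).smulRight (EuclideanSpace.single i 1)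

theorem rotationGenerator_apply (i j : Fin 3) (ω : E3) :
    rotationGenerator i j ω
      = ω i • EuclideanSpace.single j (1 : ℝ) - ω j • EuclideanSpace.single i (1 : ℝ) := rfl

theorem rotationGenerator_mem_skewAdjoint (i j : Fin 3) :
    rotationGenerator i j ∈ skewAdjoint (E3 →L[ℝ] E3) := by
  rw [skewAdjoint.mem_iff, ContinuousLinearMap.star_eq_adjoint, eq_comm,
    ContinuousLinearMap.eq_adjoint_iff]
  intro x y
  simp [rotationGenerator_apply, inner_sub_left, inner_sub_right, inner_smul_left,
    inner_smul_right, EuclideanSpace.inner_single_left, EuclideanSpace.inner_single_right]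
  ring

theorem EuclideanSpace.eq_sum_single (ω : E3) :
    ω = ∑ k, ω k • EuclideanSpace.single k (1 : ℝ) := by
  ext i
  simp [Pi.single_apply]

/-- Darboux's equation for the integrals of a function over spheres. -/
theorem integral_sphereMeasure_darboux {φ : E3 → ℝ} (hφ : ContDiff ℝ (⊤ : ℕ∞) φ) (x : E3) (s : ℝ) :
    2 * ∫ ω, fderiv ℝ φ (x + s • ω) ω ∂sphereMeasure
        + s * ∫ ω, fderiv ℝ (fderiv ℝ φ) (x + s • ω) ω ω ∂sphereMeasure
      = s * ∑ k, ∫ ω, fderiv ℝ (fderiv ℝ φ) (x + s • ω) (EuclideanSpace.single k 1)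
          (EuclideanSpace.single k 1) ∂sphereMeasure := by
  have hφ' : ContDiff ℝ (⊤ : ℕ∞) (fderiv ℝ φ) := hφ.fderiv_right (by simp)
  have hc' : Continuous (fderiv ℝ φ) := hφ'.continuous
  have hc'' : Continuous (fderiv ℝ (fderiv ℝ φ)) := hφ'.continuous_fderiv (by simp)
  have hint {g : E3 → ℝ} (hg : Continuous g) : Integrable g sphereMeasure :=
    hg.integrable_of_ae_mem_isCompact (isCompact_sphere 0 1) ae_sphereMeasure_mem
  have hderiv (i j : Fin 3) (ω v : E3) :
      fderiv ℝ (fun ω : E3 => ω i * fderiv ℝ φ (x + s • ω) (EuclideanSpace.single j 1)) ω v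
        = v i * fderiv ℝ φ (x + s • ω) (EuclideanSpace.single j 1)
          + ω i * (s * fderiv ℝ (fderiv ℝ φ) (x + s • ω) v (EuclideanSpace.single j 1)) := by
    have h1 : HasFDerivAt (fun ω : E3 => ω i) (EuclideanSpace.proj i : E3 →L[ℝ] ℝ) ω :=
      (EuclideanSpace.proj i : E3 →L[ℝ] ℝ).hasFDerivAt
    have h2 : HasFDerivAt (𝕜 := ℝ) (fun ω : E3 => x + s • ω) _ ω :=
      ((hasFDerivAt_id ω).const_smul s).const_add x
    have h3 : HasFDerivAt (fun ω : E3 => fderiv ℝ φ (x + s • ω)) _ ω :=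
      ((hφ'.differentiable (by simp)) (x + s • ω)).hasFDerivAt.comp ω h2
    have h4 : HasFDerivAt
        (fun ω : E3 => ω i * fderiv ℝ φ (x + s • ω) (EuclideanSpace.single j 1)) _ ω :=
      h1.mul (h3.clm_apply (hasFDerivAt_const (EuclideanSpace.single j (1 : ℝ)) ω))
    rw [h4.fderiv]
    simp
    ring
  have hzero (i j : Fin 3) := integral_fderiv_skew_sphereMeasure
    (h := fun ω : E3 => ω i * fderiv ℝ φ (x + s • ω) (EuclideanSpace.single j 1))
    (by fun_prop) (rotationGenerator_mem_skewAdjoint i j)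
  simp_rw [hderiv] at hzero
  have hsum := Finset.sum_eq_zero fun ij (_ : ij ∈ (Finset.univ : Finset (Fin 3 × Fin 3))) =>
    hzero ij.1 ij.2
  rw [← integral_finsetSum _ fun k _ => hint (by fun_prop)] at hsum ⊢
  rw [← sub_eq_zero, ← neg_eq_zero, ← hsum,
    ← integral_const_mul, ← integral_const_mul, ← integral_const_mul,
    ← integral_add (hint (by fun_prop)) (hint (by fun_prop)),
    ← integral_sub (hint (by fun_prop)) (hint (by fun_prop)), ← integral_neg]
  refine integral_congr_ae (ae_sphereMeasure_mem.mono fun ω hω => ?_)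
  have hnorm : ω 0 ^ 2 + ω 1 ^ 2 + ω 2 ^ 2 = 1 := by
    have : ‖ω‖ = 1 := by simpa using hω
    have h := EuclideanSpace.norm_sq_eq ω
    rw [this, Fin.sum_univ_three] at h
    simpa using h.symm
  beta_reduce
  generalize fderiv ℝ (fderiv ℝ φ) (x + s • ω) = B
  generalize fderiv ℝ φ (x + s • ω) = L
  have hL : L ω = ∑ k, ω k * L (EuclideanSpace.single k 1) := by
    conv_lhs => rw [EuclideanSpace.eq_sum_single ω]
    simp
  have hB : B ω ω = ∑ k, ∑ l,
      ω k * (ω l * B (EuclideanSpace.single l 1) (EuclideanSpace.single k 1)) := by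
    conv_lhs => rw [EuclideanSpace.eq_sum_single ω]
    simp [Finset.mul_sum]
  simp only [hL, hB, rotationGenerator_apply, map_sub, map_smul]
  simp [Fintype.sum_prod_type, Fin.sum_univ_three]
  linear_combination (-s * (B (EuclideanSpace.single 0 1) (EuclideanSpace.single 0 1)
    + B (EuclideanSpace.single 1 1) (EuclideanSpace.single 1 1)
    + B (EuclideanSpace.single 2 1) (EuclideanSpace.single 2 1))) * hnorm

end SphericalMeans

section WaveEquation

local notation "E3" => EuclideanSpace ℝ (Fin 3)

/-- The integral of `k` over the sphere of radius `t - τ` around `x` at time `τ`, which is a section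
of the backward light cone of `(t, x)`. The second argument of `k` is the unit normal. -/
def coneMean (k : (ℝ × EuclideanSpace ℝ (Fin 3)) × EuclideanSpace ℝ (Fin 3) → ℝ)
    (q : ℝ × (ℝ × EuclideanSpace ℝ (Fin 3))) : ℝ :=
  ∫ ω, k ((q.1, q.2.2 + (q.2.1 - q.1) • ω), ω) ∂sphereMeasure

variable {k : (ℝ × E3) × E3 → ℝ} {f : ℝ × E3 → ℝ}

theorem contDiff_coneMean (hk : ContDiff ℝ (⊤ : ℕ∞) k) : ContDiff ℝ (⊤ : ℕ∞) (coneMean k) :=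
  contDiff_integral_of_contDiff
    (F := fun q : (ℝ × (ℝ × E3)) × E3 => k ((q.1.1, q.1.2.2 + (q.1.2.1 - q.1.1) • q.2), q.2))
    (by fun_prop) (isCompact_sphere 0 1) ae_sphereMeasure_mem

theorem coneMean_vertex (f : ℝ × E3 → ℝ) (p : ℝ × E3) :
    coneMean (fun y => f y.1) (p.1, p) = 4 * Real.pi * f p := by
  simp [coneMean, sphereMeasure_real_univ]

theorem fderiv_coneMean (hk : ContDiff ℝ (⊤ : ℕ∞) k) (q : ℝ × (ℝ × E3)) (w : ℝ × E3) :
    fderiv ℝ (coneMean k) q (0, w)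
      = coneMean (fun y => fderiv ℝ k y ((0, w.2 + w.1 • y.2), 0)) q := by
  have hF : ContDiff ℝ (⊤ : ℕ∞) fun q : (ℝ × (ℝ × E3)) × E3 =>
    k ((q.1.1, q.1.2.2 + (q.1.2.1 - q.1.1) • q.2), q.2) := by fun_prop
  have := fderiv_integral_of_contDiff_apply (hF.of_le (by exact_mod_cast le_top))
    (isCompact_sphere 0 1) ae_sphereMeasure_mem q (0, w)
  refine this.trans (integral_congr_ae (.of_forall fun ω => ?_))
  have h1 : HasFDerivAt (𝕜 := ℝ) (fun q : (ℝ × (ℝ × E3)) × E3 => q.1.1) _ (q, ω) :=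
    (hasFDerivAt_fst (p := q)).comp (q, ω) hasFDerivAt_fst
  have h2 : HasFDerivAt (𝕜 := ℝ) (fun q : (ℝ × (ℝ × E3)) × E3 => q.1.2) _ (q, ω) :=
    (hasFDerivAt_snd (p := q)).comp (q, ω) hasFDerivAt_fst
  have h21 : HasFDerivAt (𝕜 := ℝ) (fun q : (ℝ × (ℝ × E3)) × E3 => q.1.2.1) _ (q, ω) :=
    (hasFDerivAt_fst (p := q.2)).comp (q, ω) h2
  have h22 : HasFDerivAt (𝕜 := ℝ) (fun q : (ℝ × (ℝ × E3)) × E3 => q.1.2.2) _ (q, ω) :=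
    (hasFDerivAt_snd (p := q.2)).comp (q, ω) h2
  have hω : HasFDerivAt (𝕜 := ℝ) (fun q : (ℝ × (ℝ × E3)) × E3 => q.2) _ (q, ω) := hasFDerivAt_snd
  have hall : HasFDerivAt (𝕜 := ℝ) (fun q : (ℝ × (ℝ × E3)) × E3 =>
      k ((q.1.1, q.1.2.2 + (q.1.2.1 - q.1.1) • q.2), q.2)) _ (q, ω) :=
    ((hk.differentiable (by simp)) ((q.1, q.2.2 + (q.2.1 - q.1) • ω), ω)).hasFDerivAt.comp (q, ω)
      ((h1.prodMk (h22.add ((h21.sub h1).smul hω))).prodMk hω)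
  beta_reduce
  rw [hall.fderiv]
  simp

theorem fderiv_sub_mul_coneMean (hk : ContDiff ℝ (⊤ : ℕ∞) k) (q : ℝ × (ℝ × E3)) (w : ℝ × E3) :
    fderiv ℝ (fun q : ℝ × (ℝ × E3) => (q.2.1 - q.1) * coneMean k q) q (0, w)
      = w.1 * coneMean k q
        + (q.2.1 - q.1) * coneMean (fun y => fderiv ℝ k y ((0, w.2 + w.1 • y.2), 0)) q := by
  have h1 : HasFDerivAt (𝕜 := ℝ) (fun q : ℝ × (ℝ × E3) => q.1) _ q := hasFDerivAt_fst
  have h2 : HasFDerivAt (𝕜 := ℝ) (fun q : ℝ × (ℝ × E3) => q.2.1) _ q :=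
    (hasFDerivAt_fst (p := q.2)).comp q hasFDerivAt_snd
  have hall : HasFDerivAt (𝕜 := ℝ) (fun q : ℝ × (ℝ × E3) => (q.2.1 - q.1) * coneMean k q) _ q :=
    (h2.sub h1).mul ((contDiff_coneMean hk).differentiable (by simp) q).hasFDerivAt
  rw [hall.fderiv, ← fderiv_coneMean hk]
  simp
  ring

/-- The integrand of Duhamel's formula for the wave equation with source `4 * π * f`. -/
def coneKernel (f : ℝ × EuclideanSpace ℝ (Fin 3) → ℝ)
    (q : ℝ × (ℝ × EuclideanSpace ℝ (Fin 3))) : ℝ :=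
  (q.2.1 - q.1) * coneMean (fun y => f y.1) q

theorem contDiff_coneKernel (hf : ContDiff ℝ (⊤ : ℕ∞) f) : ContDiff ℝ (⊤ : ℕ∞) (coneKernel f) := by
  have := contDiff_coneMean (k := fun y => f y.1) (by fun_prop)
  unfold coneKernel
  fun_prop

theorem fderiv_comp_fst_inl (hf : ContDiff ℝ (⊤ : ℕ∞) f) (y : (ℝ × E3) × E3) (v : ℝ × E3) :
    fderiv ℝ (fun y : (ℝ × E3) × E3 => f y.1) y (v, 0) = fderiv ℝ f y.1 v := by
  have h : HasFDerivAt (𝕜 := ℝ) (fun y : (ℝ × E3) × E3 => f y.1) _ y :=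
    (hf.differentiable (by simp) y.1).hasFDerivAt.comp y hasFDerivAt_fst
  rw [h.fderiv]
  rfl

theorem fderiv_coneKernel (hf : ContDiff ℝ (⊤ : ℕ∞) f) (q : ℝ × (ℝ × E3)) (w : ℝ × E3) :
    fderiv ℝ (coneKernel f) q (0, w)
      = w.1 * coneMean (fun y => f y.1) q
        + (q.2.1 - q.1) * coneMean (fun y => fderiv ℝ f y.1 (0, w.2 + w.1 • y.2)) q := by
  have h := fderiv_sub_mul_coneMean (k := fun y => f y.1) (by fun_prop) q w
  simp only [fderiv_comp_fst_inl hf] at h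
  exact h

theorem fderiv_fderiv_coneKernel (hf : ContDiff ℝ (⊤ : ℕ∞) f) (q : ℝ × (ℝ × E3)) (w : ℝ × E3) :
    fderiv ℝ (fun q => fderiv ℝ (coneKernel f) q (0, w)) q (0, w)
      = 2 * w.1 * coneMean (fun y => fderiv ℝ f y.1 (0, w.2 + w.1 • y.2)) q
        + (q.2.1 - q.1) * coneMean (fun y =>
          fderiv ℝ (fderiv ℝ f) y.1 (0, w.2 + w.1 • y.2) (0, w.2 + w.1 • y.2)) q := by
  have hf' : ContDiff ℝ (⊤ : ℕ∞) (fderiv ℝ f) := hf.fderiv_right (by simp)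
  have hk1 : ContDiff ℝ (⊤ : ℕ∞) fun y : (ℝ × E3) × E3 => fderiv ℝ f y.1 (0, w.2 + w.1 • y.2) := by
    fun_prop
  have hk0 : ContDiff ℝ (⊤ : ℕ∞) fun y : (ℝ × E3) × E3 => f y.1 := by fun_prop
  have hd (y : (ℝ × E3) × E3) (v : ℝ × E3) :
      fderiv ℝ (fun y : (ℝ × E3) × E3 => fderiv ℝ f y.1 (0, w.2 + w.1 • y.2)) y (v, 0)
        = fderiv ℝ (fderiv ℝ f) y.1 v (0, w.2 + w.1 • y.2) := by
    have h1 : HasFDerivAt (𝕜 := ℝ) (fun y : (ℝ × E3) × E3 => fderiv ℝ f y.1) _ y :=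
      (hf'.differentiable (by simp) y.1).hasFDerivAt.comp y hasFDerivAt_fst
    have h2 : HasFDerivAt (𝕜 := ℝ) (fun y : (ℝ × E3) × E3 => ((0 : ℝ), w.2 + w.1 • y.2)) _ y :=
      (hasFDerivAt_const (0 : ℝ) y).prodMk
        ((hasFDerivAt_snd.const_smul w.1).const_add w.2)
    rw [(h1.clm_apply h2).fderiv]
    simp
    exact map_zero _
  have hM := contDiff_coneMean hk0
  have hM1 := contDiff_coneMean hk1
  have hsum : HasFDerivAt (𝕜 := ℝ) (fun q : ℝ × (ℝ × E3) => w.1 * coneMean (fun y => f y.1) q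
      + (q.2.1 - q.1) * coneMean (fun y => fderiv ℝ f y.1 (0, w.2 + w.1 • y.2)) q) _ q :=
    ((hM.differentiable (by simp) q).hasFDerivAt.const_mul w.1).add
      ((by fun_prop : ContDiff ℝ (⊤ : ℕ∞) fun q : ℝ × (ℝ × E3) => (q.2.1 - q.1) *
        coneMean (fun y => fderiv ℝ f y.1 (0, w.2 + w.1 • y.2)) q).differentiable
        (by simp) q).hasFDerivAt
  simp_rw [fderiv_coneKernel hf]
  rw [hsum.fderiv]
  simp only [add_apply, smul_apply, fderiv_sub_mul_coneMean hk1, fderiv_coneMean hk0, hd,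
    fderiv_comp_fst_inl hf,
    smul_eq_mul]
  ring

/-- The Duhamel integrand solves the homogeneous wave equation in `(t, x)`. -/
theorem wave_coneKernel (hf : ContDiff ℝ (⊤ : ℕ∞) f) (q : ℝ × (ℝ × E3)) :
    fderiv ℝ (fun q => fderiv ℝ (coneKernel f) q (0, (1, 0))) q (0, (1, 0))
      = ∑ j, fderiv ℝ (fun q => fderiv ℝ (coneKernel f) q (0, (0, EuclideanSpace.single j 1))) q
          (0, (0, EuclideanSpace.single j 1)) := by
  have hf' : ContDiff ℝ (⊤ : ℕ∞) (fderiv ℝ f) := hf.fderiv_right (by simp)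
  have hslice (y : E3) : HasFDerivAt (𝕜 := ℝ) (fun y : E3 => (q.1, y)) _ y :=
    hasFDerivAt_prodMk_right q.1 y
  have hd (y : E3) : fderiv ℝ (fun y => f (q.1, y)) y
      = (fderiv ℝ f (q.1, y)).comp (ContinuousLinearMap.inr ℝ ℝ E3) :=
    ((hf.differentiable (by simp) (q.1, y)).hasFDerivAt.comp y (hslice y)).fderiv
  have hdd (y u v : E3) : fderiv ℝ (fderiv ℝ (fun y => f (q.1, y))) y u v
      = fderiv ℝ (fderiv ℝ f) (q.1, y) (0, u) (0, v) := by
    have h : HasFDerivAt (𝕜 := ℝ) (fun y : E3 => fderiv ℝ f (q.1, y)) _ y :=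
      (hf'.differentiable (by simp) (q.1, y)).hasFDerivAt.comp y (hslice y)
    rw [funext hd, (h.clm_comp (hasFDerivAt_const (ContinuousLinearMap.inr ℝ ℝ E3) y)).fderiv]
    simp
  have hdarboux := integral_sphereMeasure_darboux (φ := fun y => f (q.1, y)) (by fun_prop)
    q.2.2 (q.2.1 - q.1)
  simp only [hdd] at hdarboux
  simp only [hd, ContinuousLinearMap.comp_apply, ContinuousLinearMap.inr_apply] at hdarboux
  simp only [fderiv_fderiv_coneKernel hf]
  simpa [coneMean, Finset.mul_sum] using hdarboux

theorem fderiv_duhamel_coneKernel (hf : ContDiff ℝ (⊤ : ℕ∞) f) (p w : ℝ × E3) :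
    fderiv ℝ (duhamel (coneKernel f)) p w
      = duhamel (fun q => fderiv ℝ (coneKernel f) q (0, w)) p := by
  rw [fderiv_duhamel (contDiff_coneKernel hf)]
  simp [coneKernel]

theorem fderiv_fderiv_duhamel_coneKernel (hf : ContDiff ℝ (⊤ : ℕ∞) f) (p w : ℝ × E3) :
    fderiv ℝ (fun q => fderiv ℝ (duhamel (coneKernel f)) q w) p w
      = w.1 ^ 2 * (4 * Real.pi * f p)
        + duhamel (fun q => fderiv ℝ (fun q => fderiv ℝ (coneKernel f) q (0, w)) q (0, w)) p := by
  have hQ' : ContDiff ℝ (⊤ : ℕ∞) (fderiv ℝ (coneKernel f)) :=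
    (contDiff_coneKernel hf).fderiv_right (by simp)
  have hQw : ContDiff ℝ (⊤ : ℕ∞) fun q => fderiv ℝ (coneKernel f) q (0, w) := by fun_prop
  rw [funext fun q => fderiv_duhamel_coneKernel hf q w]
  refine (fderiv_duhamel hQw p w).trans ?_
  rw [fderiv_coneKernel hf, coneMean_vertex]
  ring

/-- Duhamel's formula solves the inhomogeneous wave equation. -/
theorem wave_duhamel_coneKernel (hf : ContDiff ℝ (⊤ : ℕ∞) f) (p : ℝ × E3) :
    fderiv ℝ (fun q => fderiv ℝ (duhamel (coneKernel f)) q (1, 0)) p (1, 0)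
      - ∑ j, fderiv ℝ (fun q => fderiv ℝ (duhamel (coneKernel f)) q
          (0, EuclideanSpace.single j 1)) p (0, EuclideanSpace.single j 1)
      = 4 * Real.pi * f p := by
  have hQ' : ContDiff ℝ (⊤ : ℕ∞) (fderiv ℝ (coneKernel f)) :=
    (contDiff_coneKernel hf).fderiv_right (by simp)
  have hcont (w : ℝ × E3) : Continuous fun q =>
      fderiv ℝ (fun q => fderiv ℝ (coneKernel f) q (0, w)) q (0, w) := by
    have hQw : ContDiff ℝ (⊤ : ℕ∞) fun q => fderiv ℝ (coneKernel f) q (0, w) := by fun_prop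
    exact (hQw.continuous_fderiv (by simp)).clm_apply continuous_const
  simp only [fderiv_fderiv_duhamel_coneKernel hf, wave_coneKernel hf]
  have hsum : duhamel (fun q => ∑ j, fderiv ℝ (fun q => fderiv ℝ (coneKernel f) q
        (0, (0, EuclideanSpace.single j 1))) q (0, (0, EuclideanSpace.single j 1))) p
      = ∑ j, duhamel (fun q => fderiv ℝ (fun q => fderiv ℝ (coneKernel f) q
        (0, (0, EuclideanSpace.single j 1))) q (0, (0, EuclideanSpace.single j 1))) p := by
    simp only [duhamel, Finset.mul_sum]
    refine integral_finsetSum _ fun j _ => Continuous.integrableOn_Icc ?_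
    have := hcont (0, EuclideanSpace.single j 1)
    exact continuous_const.mul (this.comp (by fun_prop))
  simp [hsum]

end WaveEquation

section PolarCoordinates

local notation "E3" => EuclideanSpace ℝ (Fin 3)

/-- Integration in spherical coordinates. -/
theorem integral_eq_integral_Ioi_sphereMeasure {h : E3 → ℝ} (hh : Integrable h) :
    ∫ z, h z = ∫ r in Ioi (0 : ℝ), r ^ 2 * ∫ ω, h (r • ω) ∂sphereMeasure := by
  have hpres := (volume : Measure E3).measurePreserving_homeomorphUnitSphereProd
  have hemb := (homeomorphUnitSphereProd E3).measurableEmbedding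
  have hdim : Module.finrank ℝ E3 - 1 = 2 := by simp
  rw [hdim] at hpres
  let g : Metric.sphere (0 : E3) 1 × Ioi (0 : ℝ) → ℝ := fun y => h (y.2.1 • y.1.1)
  have hg (z : ({0}ᶜ : Set E3)) : g (homeomorphUnitSphereProd E3 z) = h z := by
    conv_rhs => rw [← (homeomorphUnitSphereProd E3).symm_apply_apply z]
    rfl
  have hgint : Integrable g ((volume : Measure E3).toSphere.prod (Measure.volumeIoiPow 2)) := by
    rw [← hpres.integrable_comp_emb hemb, Function.comp_def]
    simp_rw [hg]
    exact (integrableOn_iff_comap_subtypeVal (measurableSet_singleton _).compl).1 hh.integrableOn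
  calc
    ∫ z, h z = ∫ z : ({0}ᶜ : Set E3), h z ∂(volume.comap Subtype.val) := by
      rw [integral_subtype_comap (measurableSet_singleton _).compl h, restrict_compl_singleton]
    _ = ∫ y, g y ∂(volume : Measure E3).toSphere.prod (Measure.volumeIoiPow 2) := by
      rw [← hpres.integral_comp hemb]
      simp_rw [hg]
    _ = ∫ r : Ioi (0 : ℝ), ∫ ω, h (r.1 • ω) ∂sphereMeasure ∂Measure.volumeIoiPow 2 := by
      rw [integral_prod_symm _ hgint]
      congr 1 with r
      exact ((MeasurableEmbedding.subtype_coe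
        Metric.isClosed_sphere.measurableSet).integral_map fun ω : E3 => h (r.1 • ω)).symm
    _ = _ := by
      simp only [Measure.volumeIoiPow, ENNReal.ofReal]
      rw [integral_withDensity_eq_integral_smul, integral_subtype_comap measurableSet_Ioi
          fun r => Real.toNNReal (r ^ 2) • ∫ ω, h (r • ω) ∂sphereMeasure]
      · refine setIntegral_congr_fun measurableSet_Ioi fun r hr => ?_
        simp [NNReal.smul_def, sq_nonneg r]
      · exact (measurable_subtype_coe.pow_const _).real_toNNReal

theorem integrableOn_closedBall_inv_norm (t : ℝ) :
    IntegrableOn (fun z : E3 => ‖z‖⁻¹) (Metric.closedBall 0 t) := by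
  have hball : IntegrableOn (fun z : E3 => ‖z‖⁻¹) (Metric.ball 0 (t + 1)) := by
    rw [integrableOn_fun_norm_addHaar volume (f := fun r => r⁻¹)]
    have hid : IntegrableOn (fun r : ℝ => r) (Ioo 0 (t + 1)) :=
      (continuous_id.integrableOn_Icc).mono_set Ioo_subset_Icc_self
    refine hid.congr_fun (fun r hr => ?_) measurableSet_Ioo
    have : r ≠ 0 := hr.1.ne'
    simp
    field_simp
  exact hball.mono_set (Metric.closedBall_subset_ball (by linarith))

/-- The retarded potential is given by Duhamel's formula. -/
theorem retardedPotential_eq_duhamel {f : ℝ × E3 → ℝ} (hf : Continuous f)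
    (hsupp : HasCompactSupport f) {t : ℝ} (ht : 0 < t) (x : E3) :
    ∫ y in {y : E3 | dist x y ≤ t}, f (t - dist x y, y) / dist x y
      = duhamel (coneKernel f) (t, x) := by
  obtain ⟨C, hC⟩ := hf.bounded_above_of_compact_support hsupp
  let h : E3 → ℝ := (Metric.closedBall 0 t).indicator fun z => f (t - ‖z‖, x + z) / ‖z‖
  have hint : Integrable h := by
    refine (integrable_indicator_iff Metric.isClosed_closedBall.measurableSet).2 ?_
    simp_rw [div_eq_mul_inv]
    refine (integrableOn_closedBall_inv_norm t).bdd_mul (c := C) ?_ (.of_forall fun z => hC _)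
    exact (hf.comp (by fun_prop)).aestronglyMeasurable
  have hinner (r : ℝ) (hr : r ∈ Ioi (0 : ℝ)) : r ^ 2 * ∫ ω, h (r • ω) ∂sphereMeasure
      = (Iic t).indicator (fun r => coneKernel f (t - r, (t, x))) r := by
    have hr0 : 0 < r := hr
    have hω : ∀ᵐ ω ∂sphereMeasure, h (r • ω)
        = (Iic t).indicator (fun r => f (t - r, x + r • ω) / r) r := by
      filter_upwards [ae_sphereMeasure_mem] with ω hω
      have hn : ‖r • ω‖ = r := by
        rw [norm_smul, mem_sphere_zero_iff_norm.1 hω, mul_one, Real.norm_of_nonneg hr0.le]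
      simp only [h, indicator, mem_closedBall_zero_iff, mem_Iic, hn]
    rw [integral_congr_ae hω]
    by_cases hrt : r ≤ t
    · simp only [indicator, mem_Iic, hrt, if_true, coneKernel, coneMean, sub_sub_cancel]
      rw [integral_div]
      field_simp
    · simp [indicator, hrt]
  calc
    _ = ∫ y, h (y - x) := by
      rw [← integral_indicator (isClosed_le (by fun_prop) continuous_const).measurableSet]
      congr 1 with y
      simp [h, indicator, dist_comm x y, dist_eq_norm y x]
    _ = ∫ r in Ioi (0 : ℝ), r ^ 2 * ∫ ω, h (r • ω) ∂sphereMeasure := by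
      rw [integral_sub_right_eq_self h x, integral_eq_integral_Ioi_sphereMeasure hint]
    _ = ∫ r in (0 : ℝ)..t, coneKernel f (t - r, (t, x)) := by
      rw [setIntegral_congr_fun measurableSet_Ioi hinner, setIntegral_indicator measurableSet_Iic,
        Ioi_inter_Iic, intervalIntegral.integral_of_le ht.le]
    _ = ∫ τ in (0 : ℝ)..t, coneKernel f (τ, (t, x)) := by
      rw [intervalIntegral.integral_comp_sub_left (fun τ => coneKernel f (τ, (t, x))) t]
      simp
    _ = _ := by
      rw [duhamel, integral_const_mul, integral_Icc_eq_integral_Ioc,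
        ← intervalIntegral.integral_of_le zero_le_one]
      simpa using (intervalIntegral.mul_integral_comp_mul_left
        (f := fun τ => coneKernel f (τ, (t, x))) (a := 0) (b := 1) t).symm

end PolarCoordinates

/-- If a continuous function vanishes at time zero, it tends to zero locally uniformly in space. -/
theorem tendstoUniformlyOn_zero_of_continuous {E : Type*} [TopologicalSpace E] {W : ℝ × E → ℝ}
    (hW : Continuous W) (h0 : ∀ x, W (0, x) = 0) {K : Set E} (hK : IsCompact K) {l : Filter ℝ}
    (hl : l ≤ nhds 0) :
    TendstoUniformlyOn (fun (t : ℝ) (x : E) => W (t, x)) (fun _ => 0) l K := by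
  intro u hu
  refine hl (hK.eventually_forall_of_forall_eventually fun x _ => ?_)
  have : Filter.Tendsto W (nhds (0, x)) (nhds 0) := by
    simpa only [h0 x] using hW.tendsto (0, x)
  exact this (mem_nhds_left 0 hu)

/-- For smooth compactly supported f, the retarded potential
    V(t,x) = (1/4π) ∫_{|x−y|≤t} f(t−|x−y|, y)/|x−y| dy is C² on (0,∞) × ℝ³,
    solves the inhomogeneous wave equation ∂ₜ²V − ΔV = f there, and has
    vanishing Cauchy data: V(t,x) → 0 and ∂ₜV(t,x) → 0 as t → 0⁺, locally
    uniformly in x. -/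
theorem retarded_potential_solves_wave
    (f : ℝ × EuclideanSpace ℝ (Fin 3) → ℝ)
    (hf : ContDiff ℝ (⊤ : ℕ∞) f) (hsupp : HasCompactSupport f)
    (V : ℝ × EuclideanSpace ℝ (Fin 3) → ℝ)
    (hV : ∀ t : ℝ, 0 < t → ∀ x : EuclideanSpace ℝ (Fin 3),
      V (t, x) = (4 * Real.pi)⁻¹
        * ∫ y in {y : EuclideanSpace ℝ (Fin 3) | dist x y ≤ t},
            f (t - dist x y, y) / dist x y) :
    ContDiffOn ℝ 2 V (Ioi (0 : ℝ) ×ˢ univ) ∧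
    (∀ p ∈ Ioi (0 : ℝ) ×ˢ (univ : Set (EuclideanSpace ℝ (Fin 3))),
      fderiv ℝ (fun q => fderiv ℝ V q (1, 0)) p (1, 0)
        - ∑ k, fderiv ℝ (fun q => fderiv ℝ V q (0, EuclideanSpace.single k 1)) p
            (0, EuclideanSpace.single k 1)
        = f p) ∧
    (∀ K : Set (EuclideanSpace ℝ (Fin 3)), IsCompact K →
      TendstoUniformlyOn (fun (t : ℝ) (x : EuclideanSpace ℝ (Fin 3)) => V (t, x))
        (fun _ => 0) (nhdsWithin 0 (Ioi 0)) K ∧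
      TendstoUniformlyOn
        (fun (t : ℝ) (x : EuclideanSpace ℝ (Fin 3)) => fderiv ℝ V (t, x) (1, 0))
        (fun _ => 0) (nhdsWithin 0 (Ioi 0)) K) := by
  set D := duhamel (coneKernel f) with hD
  let W : ℝ × EuclideanSpace ℝ (Fin 3) → ℝ := fun p => (4 * Real.pi)⁻¹ * D p
  have hDc : ContDiff ℝ (⊤ : ℕ∞) D := contDiff_duhamel (contDiff_coneKernel hf)
  have hWc : ContDiff ℝ (⊤ : ℕ∞) W := contDiff_const.mul hDc
  have hW' (p w : ℝ × EuclideanSpace ℝ (Fin 3)) :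
      fderiv ℝ W p w = (4 * Real.pi)⁻¹ * fderiv ℝ D p w := by
    rw [((hDc.differentiable (by simp) p).hasFDerivAt.const_mul (4 * Real.pi)⁻¹).fderiv]
    rfl
  have hW'' (p w : ℝ × EuclideanSpace ℝ (Fin 3)) :
      fderiv ℝ (fun q => fderiv ℝ W q w) p w
        = (4 * Real.pi)⁻¹ * fderiv ℝ (fun q => fderiv ℝ D q w) p w := by
    have hDw : Differentiable ℝ fun q => fderiv ℝ D q w :=
      ((hDc.fderiv_right (m := (⊤ : ℕ∞)) (by simp)).clm_apply contDiff_const).differentiable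
        (by simp)
    rw [funext fun q => hW' q w, ((hDw p).hasFDerivAt.const_mul (4 * Real.pi)⁻¹).fderiv]
    rfl
  have hVW : EqOn V W (Ioi (0 : ℝ) ×ˢ univ) := fun p hp => by
    rw [← Prod.mk.eta (p := p), hV p.1 hp.1, retardedPotential_eq_duhamel hf.continuous hsupp hp.1]
  have hopen : IsOpen (Ioi (0 : ℝ) ×ˢ (univ : Set (EuclideanSpace ℝ (Fin 3)))) :=
    isOpen_Ioi.prod isOpen_univ
  have hloc (p) (hp : p ∈ Ioi (0 : ℝ) ×ˢ (univ : Set (EuclideanSpace ℝ (Fin 3)))) :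
      V =ᶠ[nhds p] W := Filter.eventuallyEq_of_mem (hopen.mem_nhds hp) hVW
  have hloc' (p) (hp : p ∈ Ioi (0 : ℝ) ×ˢ (univ : Set (EuclideanSpace ℝ (Fin 3)))) (w) :
      fderiv ℝ (fun q => fderiv ℝ V q w) p w = fderiv ℝ (fun q => fderiv ℝ W q w) p w := by
    have h : (fun q => fderiv ℝ V q w) =ᶠ[nhds p] fun q => fderiv ℝ W q w := by
      filter_upwards [(hloc p hp).fderiv (𝕜 := ℝ)] with q hq
      rw [hq]
    rw [h.fderiv_eq]
  refine ⟨(contDiff_infty.1 hWc 2).contDiffOn.congr hVW, fun p hp => ?_,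
    fun K hK => ⟨?_, ?_⟩⟩
  · simp only [hloc' p hp, hW'']
    rw [← Finset.mul_sum, ← mul_sub, wave_duhamel_coneKernel hf]
    field_simp
  · refine (tendstoUniformlyOn_zero_of_continuous hWc.continuous (fun x => ?_) hK
      nhdsWithin_le_nhds).congr ?_
    · simp [W, hD, duhamel]
    · filter_upwards [self_mem_nhdsWithin] with t ht x _
      exact (hVW ⟨ht, mem_univ x⟩).symm
  · refine (tendstoUniformlyOn_zero_of_continuous (W := fun p => fderiv ℝ W p (1, 0))
      ((hWc.continuous_fderiv (by simp)).clm_apply continuous_const) (fun x => ?_) hK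
      nhdsWithin_le_nhds).congr ?_
    · rw [hW', hD, fderiv_duhamel_coneKernel hf]
      simp [duhamel]
    · filter_upwards [self_mem_nhdsWithin] with t ht x _
      beta_reduce
      rw [(hloc (t, x) ⟨ht, mem_univ x⟩).fderiv_eq]

end
end
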